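/- arXiv:2305.12615 — 4 statements merged into one kernel-verified Lean document; each statement's English description precedes it below -/
import Mathlib

section
/- Under the hypotheses (H1)–(H3) on the pressure P, the internal energy e(ρ) = ∫₀^ρ P(s)/s² ds is well defined for ρ > 0 (the integral converges), e'(ρ) = P(ρ)/ρ², and there exist thresholds ρ̄₁ ∈ (0, ρ_*], ρ̄₂ ≥ ρ^* and a constant C > 0 such that: C⁻¹ ρ^{γ₁-1} ≤ e(ρ) ≤ C ρ^{γ₁-1} and C⁻¹ ρ^{γ₁-2} ≤ e'(ρ) ≤ C ρ^{γ₁-2} for all ρ ∈ (0, ρ̄₁]; and C⁻¹ ρ^{γ₂-1} ≤ e(ρ) ≤ C ρ^{γ₂-1} and C⁻¹ ρ^{γ₂-2} ≤ e'(ρ) ≤ C ρ^{γ₂-2} for all ρ ≥ ρ̄₂. -/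
open Set MeasureTheory Filter

/-!
Integration preserves asymptotic equivalence with an eventually nonnegative function, both for
integrals `∫ s in a..x` shrinking to a point (`x → a⁺`) and for integrals diverging at infinity.
The expansions of the pressure say `P ρ ~ κ₁ ρ ^ γ₁` at `0⁺` and `P ρ ~ κ₂ ρ ^ γ₂` at `∞`, so
`P ρ / ρ ^ 2 ~ κ ρ ^ (γ - 2)` and, since `γ - 2 > -1` in both regimes,
`e ρ ~ κ / (γ - 1) * ρ ^ (γ - 1)`. An equivalence with a positive multiple of a nonnegative function
gives two-sided bounds with every sufficiently large constant `C`, so one `C` serves all the bounds.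
-/

open Asymptotics
open scoped Topology

section IntegralAsymptotics

variable {E : Type*} [NormedAddCommGroup E] {F : ℝ → E} {f g : ℝ → ℝ} {a : ℝ} {μ : Measure ℝ}

lemma intervalIntegrable_of_isBigO_nhdsGT {x : ℝ} (hF : LocallyIntegrableOn F (Ioi a) μ)
    (hFg : F =O[𝓝[>] a] g) (hg : IntegrableAtFilter g (𝓝[>] a) μ) (hax : a < x) :
    IntervalIntegrable F μ a x := by
  have hmeas : StronglyMeasurableAtFilter F (𝓝[>] a) μ :=
    ⟨Ioi a, self_mem_nhdsWithin, hF.aestronglyMeasurable⟩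
  obtain ⟨t, ht, hFt⟩ := hFg.integrableAtFilter hmeas hg
  obtain ⟨r, har, hrt⟩ := mem_nhdsGT_iff_exists_Ioc_subset.mp ht
  have hnear : IntervalIntegrable F μ a r :=
    (intervalIntegrable_iff_integrableOn_Ioc_of_le (mem_Ioi.mp har).le).mpr (hFt.mono_set hrt)
  have haway : IntegrableOn F (uIcc r x) μ :=
    hF.integrableOn_compact_subset (fun s hs ↦ (lt_min har hax).trans_le hs.1) isCompact_uIcc
  exact hnear.trans haway.intervalIntegrable

variable [NormedSpace ℝ E]

lemma isLittleO_integral_nhdsGT (hFg : F =o[𝓝[>] a] g)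
    (hg : ∀ᶠ x in 𝓝[>] a, IntervalIntegrable g μ a x) (hg₀ : ∀ᶠ x in 𝓝[>] a, 0 ≤ g x) :
    (fun x ↦ ∫ s in a..x, F s ∂μ) =o[𝓝[>] a] fun x ↦ ∫ s in a..x, g s ∂μ := by
  refine isLittleO_iff.mpr fun c hc ↦ ?_
  have hbound : ∀ᶠ s in 𝓝[>] a, ‖F s‖ ≤ c * g s := by
    filter_upwards [hFg.def hc, hg₀] with s hs hgs
    rwa [Real.norm_of_nonneg hgs] at hs
  obtain ⟨r, har, hr⟩ := mem_nhdsGT_iff_exists_Ioc_subset.mp hbound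
  filter_upwards [hg, Ioc_mem_nhdsGT har] with x hgx hx
  calc ‖∫ s in a..x, F s ∂μ‖ ≤ ∫ s in a..x, c * g s ∂μ :=
        intervalIntegral.norm_integral_le_of_norm_le hx.1.le
          (.of_forall fun s hs ↦ hr ⟨hs.1, hs.2.trans hx.2⟩) (hgx.const_mul c)
    _ = c * ∫ s in a..x, g s ∂μ := intervalIntegral.integral_const_mul c g
    _ ≤ c * ‖∫ s in a..x, g s ∂μ‖ := by gcongr; exact Real.le_norm_self _

lemma isLittleO_integral_atTop (hFg : F =o[atTop] g)
    (hF : ∀ x, a < x → IntervalIntegrable F μ a x)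
    (hg : ∀ x, a < x → IntervalIntegrable g μ a x) (hg₀ : ∀ᶠ x in atTop, 0 ≤ g x)
    (hg_top : Tendsto (fun x ↦ ∫ s in a..x, g s ∂μ) atTop atTop) :
    (fun x ↦ ∫ s in a..x, F s ∂μ) =o[atTop] fun x ↦ ∫ s in a..x, g s ∂μ := by
  refine isLittleO_iff.mpr fun c hc ↦ ?_
  have hbound : ∀ᶠ s in atTop, ‖F s‖ ≤ c / 2 * g s := by
    filter_upwards [hFg.def (half_pos hc), hg₀] with s hs hgs
    rwa [Real.norm_of_nonneg hgs] at hs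
  obtain ⟨R, hR⟩ := (hbound.and (eventually_gt_atTop a)).exists_forall_of_atTop
  have haR : a < R := (hR R le_rfl).2
  set K := ‖∫ s in a..R, F s ∂μ‖ - c / 2 * ∫ s in a..R, g s ∂μ
  filter_upwards [eventually_ge_atTop R,
    (hg_top.const_mul_atTop (half_pos hc)).eventually_ge_atTop K] with x hRx hK
  have hax := haR.trans_le hRx
  have hgRx : IntervalIntegrable g μ R x := (hg R haR).symm.trans (hg x hax)
  have htail : ‖∫ s in R..x, F s ∂μ‖ ≤ c / 2 * ∫ s in R..x, g s ∂μ := by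
    rw [← intervalIntegral.integral_const_mul]
    exact intervalIntegral.norm_integral_le_of_norm_le hRx
      (.of_forall fun s hs ↦ (hR s hs.1.le).1) (hgRx.const_mul _)
  calc ‖∫ s in a..x, F s ∂μ‖
      = ‖(∫ s in a..R, F s ∂μ) + ∫ s in R..x, F s ∂μ‖ := by
        rw [intervalIntegral.integral_add_adjacent_intervals (hF R haR)
          ((hF R haR).symm.trans (hF x hax))]
    _ ≤ ‖∫ s in a..R, F s ∂μ‖ + c / 2 * ∫ s in R..x, g s ∂μ := norm_add_le_of_le le_rfl htail
    _ = K + c / 2 * ∫ s in a..x, g s ∂μ := by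
        rw [← intervalIntegral.integral_add_adjacent_intervals (hg R haR) hgRx]; ring
    _ ≤ c * ∫ s in a..x, g s ∂μ := by linarith
    _ ≤ c * ‖∫ s in a..x, g s ∂μ‖ := by gcongr; exact Real.le_norm_self _

lemma isEquivalent_integral_nhdsGT (hfg : f ~[𝓝[>] a] g)
    (hf : ∀ᶠ x in 𝓝[>] a, IntervalIntegrable f μ a x)
    (hg : ∀ᶠ x in 𝓝[>] a, IntervalIntegrable g μ a x) (hg₀ : ∀ᶠ x in 𝓝[>] a, 0 ≤ g x) :
    (fun x ↦ ∫ s in a..x, f s ∂μ) ~[𝓝[>] a] fun x ↦ ∫ s in a..x, g s ∂μ := by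
  refine (isLittleO_integral_nhdsGT hfg.isLittleO hg hg₀).congr' ?_ .rfl
  filter_upwards [hf, hg] with x hfx hgx using intervalIntegral.integral_sub hfx hgx

lemma isEquivalent_integral_atTop (hfg : f ~[atTop] g)
    (hf : ∀ x, a < x → IntervalIntegrable f μ a x)
    (hg : ∀ x, a < x → IntervalIntegrable g μ a x) (hg₀ : ∀ᶠ x in atTop, 0 ≤ g x)
    (hg_top : Tendsto (fun x ↦ ∫ s in a..x, g s ∂μ) atTop atTop) :
    (fun x ↦ ∫ s in a..x, f s ∂μ) ~[atTop] fun x ↦ ∫ s in a..x, g s ∂μ := by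
  refine (isLittleO_integral_atTop hfg.isLittleO (fun x hx ↦ (hf x hx).sub (hg x hx)) hg hg₀
    hg_top).congr' ?_ .rfl
  filter_upwards [eventually_gt_atTop a] with x hx
    using intervalIntegral.integral_sub (hf x hx) (hg x hx)

end IntegralAsymptotics

section Equivalence

variable {α : Type*} {l : Filter α} {f g q δ : α → ℝ} {κ : ℝ}

lemma isEquivalent_of_eq_mul_one_add (hf : ∀ᶠ x in l, f x = g x * (1 + q x))
    (hq : ∀ᶠ x in l, |q x| ≤ δ x) (hδ : Tendsto δ l (𝓝 0)) : f ~[l] g := by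
  have hq₀ : Tendsto q l (𝓝 0) := squeeze_zero_norm' hq hδ
  refine isEquivalent_iff_exists_eq_mul.mpr ⟨fun x ↦ 1 + q x, by simpa using hq₀.const_add 1, ?_⟩
  filter_upwards [hf] with x hx
  rw [hx, Pi.mul_apply, mul_comm]

lemma eventually_inv_mul_le_and_le_mul (hκ : 0 < κ) (hfg : f ~[l] fun x ↦ κ * g x)
    (hg : ∀ᶠ x in l, 0 ≤ g x) :
    ∀ᶠ C in atTop, ∀ᶠ x in l, C⁻¹ * g x ≤ f x ∧ f x ≤ C * g x := by
  filter_upwards [eventually_ge_atTop (2 * κ),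
    tendsto_inv_atTop_zero.eventually_le_const (half_pos hκ)] with C hC hC_inv
  filter_upwards [hfg.isLittleO.def one_half_pos, hg] with x hx hgx
  rw [Pi.sub_apply, Real.norm_eq_abs, Real.norm_of_nonneg (by positivity)] at hx
  obtain ⟨hlower, hupper⟩ := abs_le.mp hx
  constructor
  · linarith [mul_le_mul_of_nonneg_right hC_inv hgx, mul_nonneg hκ.le hgx]
  · linarith [mul_le_mul_of_nonneg_right hC hgx, mul_nonneg hκ.le hgx]

end Equivalence

section PowerRemainder

variable {f g q : ℝ → ℝ} {b c r : ℝ}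

lemma isEquivalent_nhdsGT_zero_of_abs_le_rpow (hr : 0 < r) (hb : 0 < b)
    (hf : ∀ x ∈ Ioo 0 r, f x = g x * (1 + q x)) (hq : ∀ x ∈ Ioo 0 r, |q x| ≤ c * x ^ b) :
    f ~[𝓝[>] 0] g := by
  have hδ : Tendsto (fun x : ℝ ↦ c * x ^ b) (𝓝 0) (𝓝 0) := by
    simpa [hb.ne'] using ((Real.continuous_rpow_const hb.le).tendsto 0).const_mul c
  have hnear := Ioo_mem_nhdsGT hr
  exact isEquivalent_of_eq_mul_one_add (eventually_of_mem hnear hf) (eventually_of_mem hnear hq)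
    (hδ.mono_left nhdsWithin_le_nhds)

lemma isEquivalent_atTop_of_abs_le_rpow_neg (hb : 0 < b)
    (hf : ∀ x, r ≤ x → f x = g x * (1 + q x)) (hq : ∀ x, r ≤ x → |q x| ≤ c * x ^ (-b)) :
    f ~[atTop] g := by
  have hδ : Tendsto (fun x : ℝ ↦ c * x ^ (-b)) atTop (𝓝 0) := by
    simpa using (tendsto_rpow_neg_atTop hb).const_mul c
  have hfar := eventually_ge_atTop r
  exact isEquivalent_of_eq_mul_one_add (hfar.mono hf) (hfar.mono hq) hδ

end PowerRemainder

section InternalEnergy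

/-- The internal energy `e(ρ) = ∫₀^ρ P(s)/s² ds` of a gas with pressure law `P`. It is an interval
integral, hence `0` by convention wherever the integrand is not integrable. -/
noncomputable def internalEnergy (P : ℝ → ℝ) (ρ : ℝ) : ℝ := ∫ s in (0 : ℝ)..ρ, P s / s ^ 2

variable {P : ℝ → ℝ} {γ κ ρ : ℝ} {l : Filter ℝ}

lemma div_sq_isEquivalent_rpow (hl : ∀ᶠ ρ in l, 0 < ρ) (hP : P ~[l] fun ρ ↦ κ * ρ ^ γ) :
    (fun ρ ↦ P ρ / ρ ^ 2) ~[l] fun ρ ↦ κ * ρ ^ (γ - 2) := by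
  refine (hP.div (IsEquivalent.refl (u := fun ρ ↦ ρ ^ 2))).congr_right ?_
  filter_upwards [hl] with ρ hρ
  rw [Pi.div_apply, Real.rpow_sub hρ, Real.rpow_two, mul_div_assoc]

lemma intervalIntegrable_rpow_sub_two (hγ : 1 < γ) (κ ρ : ℝ) :
    IntervalIntegrable (fun s ↦ κ * s ^ (γ - 2)) volume 0 ρ :=
  (intervalIntegral.intervalIntegrable_rpow' (by linarith)).const_mul κ

lemma integral_rpow_sub_two (hγ : 1 < γ) (κ ρ : ℝ) :
    ∫ s in (0 : ℝ)..ρ, κ * s ^ (γ - 2) = κ / (γ - 1) * ρ ^ (γ - 1) := by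
  rw [intervalIntegral.integral_const_mul, integral_rpow (Or.inl (by linarith)),
    show γ - 2 + 1 = γ - 1 by ring, Real.zero_rpow (by linarith)]
  ring

lemma continuousOn_div_sq (hP : ContinuousOn P (Ioi 0)) :
    ContinuousOn (fun s ↦ P s / s ^ 2) (Ioi 0) :=
  hP.div (by fun_prop) fun _ hs ↦ pow_ne_zero 2 (ne_of_gt hs)

lemma intervalIntegrable_div_sq (hP : ContinuousOn P (Ioi 0)) (hγ : 1 < γ)
    (hP₀ : P ~[𝓝[>] 0] fun ρ ↦ κ * ρ ^ γ) (hρ : 0 < ρ) :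
    IntervalIntegrable (fun s ↦ P s / s ^ 2) volume 0 ρ :=
  intervalIntegrable_of_isBigO_nhdsGT
    ((continuousOn_div_sq hP).locallyIntegrableOn measurableSet_Ioi)
    (div_sq_isEquivalent_rpow self_mem_nhdsWithin hP₀).isBigO
    ⟨Ioc 0 1, Ioc_mem_nhdsGT one_pos, (intervalIntegrable_rpow_sub_two hγ κ 1).1⟩ hρ

lemma hasDerivAt_internalEnergy (hP : ContinuousOn P (Ioi 0))
    (hint : IntervalIntegrable (fun s ↦ P s / s ^ 2) volume 0 ρ) (hρ : 0 < ρ) :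
    HasDerivAt (internalEnergy P) (P ρ / ρ ^ 2) ρ :=
  intervalIntegral.integral_hasDerivAt_right hint
    ((continuousOn_div_sq hP).stronglyMeasurableAtFilter isOpen_Ioi ρ hρ)
    ((continuousOn_div_sq hP).continuousAt (Ioi_mem_nhds hρ))

lemma internalEnergy_isEquivalent_nhdsGT_zero
    (hint : ∀ ρ, 0 < ρ → IntervalIntegrable (fun s ↦ P s / s ^ 2) volume 0 ρ) (hγ : 1 < γ)
    (hκ : 0 ≤ κ) (hP₀ : P ~[𝓝[>] 0] fun ρ ↦ κ * ρ ^ γ) :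
    internalEnergy P ~[𝓝[>] 0] fun ρ ↦ κ / (γ - 1) * ρ ^ (γ - 1) := by
  simp_rw [← integral_rpow_sub_two hγ]
  refine isEquivalent_integral_nhdsGT (div_sq_isEquivalent_rpow self_mem_nhdsWithin hP₀)
    (eventually_mem_nhdsWithin.mono hint) (.of_forall (intervalIntegrable_rpow_sub_two hγ κ)) ?_
  filter_upwards [self_mem_nhdsWithin] with s hs
  exact mul_nonneg hκ (Real.rpow_nonneg (mem_Ioi.mp hs).le _)

lemma internalEnergy_isEquivalent_atTop
    (hint : ∀ ρ, 0 < ρ → IntervalIntegrable (fun s ↦ P s / s ^ 2) volume 0 ρ) (hγ : 1 < γ)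
    (hκ : 0 < κ) (hP_top : P ~[atTop] fun ρ ↦ κ * ρ ^ γ) :
    internalEnergy P ~[atTop] fun ρ ↦ κ / (γ - 1) * ρ ^ (γ - 1) := by
  have hγ' : 0 < γ - 1 := sub_pos.mpr hγ
  have hdiv : Tendsto (fun ρ ↦ κ / (γ - 1) * ρ ^ (γ - 1)) atTop atTop :=
    (tendsto_rpow_atTop hγ').const_mul_atTop (div_pos hκ hγ')
  simp_rw [← integral_rpow_sub_two hγ] at hdiv ⊢
  refine isEquivalent_integral_atTop (div_sq_isEquivalent_rpow (eventually_gt_atTop 0) hP_top)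
    hint (fun ρ _ ↦ intervalIntegrable_rpow_sub_two hγ κ ρ) ?_ hdiv
  filter_upwards [eventually_ge_atTop 0] with s hs
  positivity

lemma eventually_internalEnergy_bounds
    (hderiv : ∀ ρ, 0 < ρ → HasDerivAt (internalEnergy P) (P ρ / ρ ^ 2) ρ)
    (hl : ∀ᶠ ρ in l, 0 < ρ) (hγ : 1 < γ) (hκ : 0 < κ) (hP : P ~[l] fun ρ ↦ κ * ρ ^ γ)
    (he : internalEnergy P ~[l] fun ρ ↦ κ / (γ - 1) * ρ ^ (γ - 1)) :
    ∀ᶠ C in atTop, ∀ᶠ ρ in l,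
      C⁻¹ * ρ ^ (γ - 1) ≤ internalEnergy P ρ ∧ internalEnergy P ρ ≤ C * ρ ^ (γ - 1) ∧
      C⁻¹ * ρ ^ (γ - 2) ≤ deriv (internalEnergy P) ρ ∧
      deriv (internalEnergy P) ρ ≤ C * ρ ^ (γ - 2) := by
  have hrpow (b : ℝ) : ∀ᶠ ρ in l, 0 ≤ ρ ^ b := hl.mono fun ρ hρ ↦ Real.rpow_nonneg hρ.le b
  filter_upwards [eventually_inv_mul_le_and_le_mul (div_pos hκ (sub_pos.mpr hγ)) he (hrpow _),
    eventually_inv_mul_le_and_le_mul hκ (div_sq_isEquivalent_rpow hl hP) (hrpow _)]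
    with C hC_energy hC_deriv
  filter_upwards [hl, hC_energy, hC_deriv] with ρ hρ henergy hderiv_bounds
  rw [(hderiv ρ hρ).deriv]
  exact ⟨henergy.1, henergy.2, hderiv_bounds⟩

theorem internal_energy_bounds_general {γ₁ γ₂ κ₁ κ₂ r₀ : ℝ} (hP : ContinuousOn P (Ioi 0))
    (hγ₁ : 1 < γ₁) (hκ₁ : 0 < κ₁) (hP₀ : P ~[𝓝[>] 0] fun ρ ↦ κ₁ * ρ ^ γ₁)
    (hγ₂ : 1 < γ₂) (hκ₂ : 0 < κ₂) (hP_top : P ~[atTop] fun ρ ↦ κ₂ * ρ ^ γ₂)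
    (hr₀ : 0 < r₀) (R₀ : ℝ) :
    (∀ ρ, 0 < ρ → IntervalIntegrable (fun s ↦ P s / s ^ 2) volume 0 ρ) ∧
    (∀ ρ, 0 < ρ → HasDerivAt (internalEnergy P) (P ρ / ρ ^ 2) ρ) ∧
    ∃ r ∈ Ioc 0 r₀, ∃ R, R₀ ≤ R ∧ ∃ C, 0 < C ∧
      (∀ ρ ∈ Ioc 0 r,
        C⁻¹ * ρ ^ (γ₁ - 1) ≤ internalEnergy P ρ ∧ internalEnergy P ρ ≤ C * ρ ^ (γ₁ - 1) ∧
        C⁻¹ * ρ ^ (γ₁ - 2) ≤ deriv (internalEnergy P) ρ ∧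
        deriv (internalEnergy P) ρ ≤ C * ρ ^ (γ₁ - 2)) ∧
      (∀ ρ, R ≤ ρ →
        C⁻¹ * ρ ^ (γ₂ - 1) ≤ internalEnergy P ρ ∧ internalEnergy P ρ ≤ C * ρ ^ (γ₂ - 1) ∧
        C⁻¹ * ρ ^ (γ₂ - 2) ≤ deriv (internalEnergy P) ρ ∧
        deriv (internalEnergy P) ρ ≤ C * ρ ^ (γ₂ - 2)) := by
  have hint := fun ρ ↦ intervalIntegrable_div_sq (ρ := ρ) hP hγ₁ hP₀
  have hderiv := fun ρ hρ ↦ hasDerivAt_internalEnergy hP (hint ρ hρ) hρ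
  have hsmall := eventually_internalEnergy_bounds hderiv self_mem_nhdsWithin hγ₁ hκ₁ hP₀
    (internalEnergy_isEquivalent_nhdsGT_zero hint hγ₁ hκ₁.le hP₀)
  have hlarge := eventually_internalEnergy_bounds hderiv (eventually_gt_atTop 0) hγ₂ hκ₂ hP_top
    (internalEnergy_isEquivalent_atTop hint hγ₂ hκ₂ hP_top)
  obtain ⟨C, hC_small, hC_large, hC⟩ :=
    (hsmall.and (hlarge.and (eventually_gt_atTop 0))).exists
  obtain ⟨r, hr, hr_bounds⟩ :=
    mem_nhdsGT_iff_exists_Ioc_subset.mp (inter_mem (Ioc_mem_nhdsGT hr₀) hC_small)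
  obtain ⟨R, hR⟩ := ((eventually_ge_atTop R₀).and hC_large).exists_forall_of_atTop
  exact ⟨hint, hderiv, r, (hr_bounds ⟨hr, le_rfl⟩).1, R, (hR R le_rfl).1, C, hC,
    fun ρ hρ ↦ (hr_bounds hρ).2, fun ρ hρ ↦ (hR ρ hρ).2⟩

end InternalEnergy

theorem internal_energy_bounds
    (P Q₁ Q₂ : ℝ → ℝ) (ρstar ρss γ₁ γ₂ κ₁ κ₂ Cs Css εe : ℝ)
    (hPC1 : ContDiffOn ℝ 1 P (Ici 0))
    (hPC4 : ContDiffOn ℝ 4 P (Ioi 0))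
    (hH1 : ∀ ρ : ℝ, 0 < ρ → 0 < deriv P ρ ∧ 0 < 2 * deriv P ρ + ρ * deriv (deriv P) ρ)
    (hρstar : 0 < ρstar) (hγ₁ : 1 < γ₁) (hγ₁3 : γ₁ < 3) (hκ₁ : 0 < κ₁) (hCs : 0 < Cs)
    (hQ₁C4 : ContDiffOn ℝ 4 Q₁ (Ioi 0))
    (hPsmall : ∀ ρ ∈ Ico (0:ℝ) ρstar, P ρ = κ₁ * ρ ^ γ₁ * (1 + Q₁ ρ))
    (hQ₁bd : ∀ ρ ∈ Ioo (0:ℝ) ρstar, ∀ j : ℕ, j ≤ 4 →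
      |iteratedDeriv j Q₁ ρ| ≤ Cs * ρ ^ (γ₁ - 1 - (j : ℝ)))
    (hρss : ρstar < ρss) (hγ₂ : 6/5 < γ₂) (hγ₂1 : γ₂ ≤ γ₁) (hκ₂ : 0 < κ₂)
    (hεe : 0 < εe) (hCss : 0 < Css)
    (hQ₂C4 : ContDiffOn ℝ 4 Q₂ (Ioi 0))
    (hPlarge : ∀ ρ : ℝ, ρss ≤ ρ → P ρ = κ₂ * ρ ^ γ₂ * (1 + Q₂ ρ))
    (hQ₂bd : ∀ ρ : ℝ, ρss ≤ ρ → ∀ j : ℕ, j ≤ 4 →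
      |iteratedDeriv j Q₂ ρ| ≤ Css * ρ ^ (-εe - (j : ℝ))) :
    ∀ e : ℝ → ℝ, (∀ ρ : ℝ, e ρ = ∫ s in (0:ℝ)..ρ, P s / s ^ 2) →
      (∀ ρ : ℝ, 0 < ρ → IntervalIntegrable (fun s => P s / s ^ 2) volume 0 ρ) ∧
      (∀ ρ : ℝ, 0 < ρ → HasDerivAt e (P ρ / ρ ^ 2) ρ) ∧
      (∃ ρb₁ ∈ Ioc (0:ℝ) ρstar, ∃ ρb₂ : ℝ, ρss ≤ ρb₂ ∧ ∃ C : ℝ, 0 < C ∧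
        (∀ ρ ∈ Ioc (0:ℝ) ρb₁,
          C⁻¹ * ρ ^ (γ₁ - 1) ≤ e ρ ∧ e ρ ≤ C * ρ ^ (γ₁ - 1) ∧
          C⁻¹ * ρ ^ (γ₁ - 2) ≤ deriv e ρ ∧ deriv e ρ ≤ C * ρ ^ (γ₁ - 2)) ∧
        (∀ ρ : ℝ, ρb₂ ≤ ρ →
          C⁻¹ * ρ ^ (γ₂ - 1) ≤ e ρ ∧ e ρ ≤ C * ρ ^ (γ₂ - 1) ∧
          C⁻¹ * ρ ^ (γ₂ - 2) ≤ deriv e ρ ∧ deriv e ρ ≤ C * ρ ^ (γ₂ - 2))) := by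
  intro e he
  obtain rfl : e = internalEnergy P := funext he
  have hP₀ := isEquivalent_nhdsGT_zero_of_abs_le_rpow hρstar (sub_pos.mpr hγ₁)
    (fun ρ hρ ↦ hPsmall ρ (Ioo_subset_Ico_self hρ))
    (fun ρ hρ ↦ by simpa using hQ₁bd ρ hρ 0 (by norm_num))
  have hP_top := isEquivalent_atTop_of_abs_le_rpow_neg hεe hPlarge
    (fun ρ hρ ↦ by simpa using hQ₂bd ρ hρ 0 (by norm_num))
  exact internal_energy_bounds_general hPC4.continuousOn hγ₁ hκ₁ hP₀ (by linarith) hκ₂ hP_top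
    hρstar ρss
end

section
/- Under the hypotheses (H1)–(H3) on the pressure P, the function k(ρ) = ∫₀^ρ √(P'(y))/y dy is well defined for ρ > 0 (the integral converges), and there exist thresholds ρ̄₁ ∈ (0, ρ_*], ρ̄₂ ≥ ρ^* and a constant C > 0 such that, with θ₁ = (γ₁-1)/2 and θ₂ = (γ₂-1)/2: for all ρ ∈ (0, ρ̄₁], C⁻¹ ρ^{θ₁} ≤ k(ρ) ≤ C ρ^{θ₁}, C⁻¹ ρ^{θ₁-1} ≤ k'(ρ) ≤ C ρ^{θ₁-1}, and C⁻¹ ρ^{θ₁-2} ≤ |k''(ρ)| ≤ C ρ^{θ₁-2}; and for all ρ ≥ ρ̄₂, C⁻¹ ρ^{θ₂} ≤ k(ρ) ≤ C ρ^{θ₂}, C⁻¹ ρ^{θ₂-1} ≤ k'(ρ) ≤ C ρ^{θ₂-1}, and C⁻¹ ρ^{θ₂-2} ≤ |k''(ρ)| ≤ C ρ^{θ₂-2}. -/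
open Set MeasureTheory Filter

/-!
Put `θ = (γ - 1) / 2` and `f y = √(P' y) / y`, so that `k' = f`. At either end of `(0, ∞)` the
expansion of `P` shows that `P' ρ` has the order of `ρ ^ (γ - 1)` and that its logarithmic
derivative satisfies `ρ P'' / P' → γ - 1`. Behaviour of this kind survives products and powers, so
`f` has it with exponent `θ - 1`. The order of `f` gives that of `k` by integration, and
`ρ f' / f → θ - 1 ≠ 0` gives that of `k'' = f'`; the limit does not vanish because `γ ≠ 3`.
-/

open Asymptotics
open scoped Topology

theorem tendsto_rpow_nhdsGT_zero {θ : ℝ} (hθ : 0 < θ) :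
    Tendsto (fun x : ℝ => x ^ θ) (𝓝[>] 0) (𝓝 0) := by
  simpa [hθ.ne'] using
    (Real.continuousAt_rpow_const 0 θ (Or.inr hθ.le)).tendsto.mono_left nhdsWithin_le_nhds

section Primitive

variable {E : Type*} [NormedAddCommGroup E] [NormedSpace ℝ E] {F F' : ℝ → E} {G G' : ℝ → ℝ}

theorem norm_sub_le_of_norm_deriv_le_deriv {a b : ℝ} (hab : a ≤ b)
    (hF : ∀ x ∈ Icc a b, HasDerivAt F (F' x) x) (hG : ∀ x ∈ Icc a b, HasDerivAt G (G' x) x)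
    (h : ∀ x ∈ Icc a b, ‖F' x‖ ≤ G' x) : ‖F b - F a‖ ≤ G b - G a := by
  have hF₀ : ∀ x ∈ Icc a b, HasDerivAt (fun y => F y - F a) (F' x) x :=
    fun x hx => (hF x hx).sub_const _
  have hG₀ : ∀ x ∈ Icc a b, HasDerivAt (fun y => G y - G a) (G' x) x :=
    fun x hx => (hG x hx).sub_const _
  exact image_norm_le_of_norm_deriv_right_le_deriv_boundary'
    (fun x hx => (hF₀ x hx).continuousAt.continuousWithinAt)
    (fun x hx => (hF₀ x (Ico_subset_Icc_self hx)).hasDerivWithinAt) (by simp)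
    (fun x hx => (hG₀ x hx).continuousAt.continuousWithinAt)
    (fun x hx => (hG₀ x (Ico_subset_Icc_self hx)).hasDerivWithinAt)
    (fun x hx => h x (Ico_subset_Icc_self hx)) (right_mem_Icc.2 hab)

theorem isBigO_atTop_of_isBigO_deriv (hF : ∀ᶠ x in atTop, HasDerivAt F (F' x) x)
    (hG : ∀ᶠ x in atTop, HasDerivAt G (G' x) x) (hG' : ∀ᶠ x in atTop, 0 ≤ G' x)
    (h : F' =O[atTop] G') (hG₁ : (fun _ => (1 : ℝ)) =O[atTop] G) : F =O[atTop] G := by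
  obtain ⟨C, hC⟩ := h.bound
  obtain ⟨R, hR⟩ := eventually_atTop.1 (hF.and (hG.and (hG'.and hC)))
  have increment : (fun x => F x - F R) =O[atTop] fun x => C * G x - C * G R := by
    refine IsBigO.of_bound' ?_
    filter_upwards [eventually_ge_atTop R] with x hx
    refine (norm_sub_le_of_norm_deriv_le_deriv hx (fun y hy => (hR y hy.1).1)
      (fun y hy => (hR y hy.1).2.1.const_mul C) fun y hy => ?_).trans (Real.le_norm_self _)
    obtain ⟨-, -, hG'y, hCy⟩ := hR y hy.1
    rwa [Real.norm_of_nonneg hG'y] at hCy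
  have majorant : (fun x => C * G x - C * G R) =O[atTop] G :=
    ((isBigO_refl G _).const_mul_left C).sub ((isBigO_const_const _ one_ne_zero _).trans hG₁)
  have const : (fun _ => F R) =O[atTop] G := (isBigO_const_const _ one_ne_zero _).trans hG₁
  simpa using (increment.trans majorant).add const

theorem isBigO_nhdsGT_of_isBigO_deriv {a : ℝ} (hF : ∀ᶠ x in 𝓝[>] a, HasDerivAt F (F' x) x)
    (hG : ∀ᶠ x in 𝓝[>] a, HasDerivAt G (G' x) x) (hG' : ∀ᶠ x in 𝓝[>] a, 0 ≤ G' x)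
    (h : F' =O[𝓝[>] a] G') (hF₀ : Tendsto F (𝓝[>] a) (𝓝 0)) (hG₀ : Tendsto G (𝓝[>] a) (𝓝 0)) :
    F =O[𝓝[>] a] G := by
  obtain ⟨C, hC₀, hC⟩ := h.exists_nonneg
  obtain ⟨δ, hδ, hsub⟩ := mem_nhdsGT_iff_exists_Ioc_subset.1 (hF.and (hG.and (hG'.and hC.bound)))
  refine IsBigO.of_bound C ?_
  filter_upwards [Ioc_mem_nhdsGT hδ] with x hx
  have increment : ∀ᶠ y in 𝓝[>] a, ‖F x - F y‖ ≤ C * G x - C * G y := by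
    filter_upwards [Ioc_mem_nhdsGT hx.1] with y hy
    have hmem : Icc y x ⊆ Ioc a δ := fun z hz => ⟨hy.1.trans_le hz.1, hz.2.trans hx.2⟩
    refine norm_sub_le_of_norm_deriv_le_deriv hy.2 (fun z hz => (hsub (hmem hz)).1)
      (fun z hz => (hsub (hmem hz)).2.1.const_mul C) fun z hz => ?_
    obtain ⟨-, -, hG'z, hCz⟩ := hsub (hmem hz)
    rwa [Real.norm_of_nonneg hG'z] at hCz
  have limit : ‖F x‖ ≤ C * G x := by
    simpa using le_of_tendsto_of_tendsto (hF₀.const_sub (F x)).norm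
      ((hG₀.const_mul C).const_sub (C * G x)) increment
  exact limit.trans (by gcongr; exact Real.le_norm_self _)

end Primitive

section PowerLike

theorem isTheta_one_of_tendsto {α : Type*} {l : Filter α} {g : α → ℝ} {c : ℝ} (hc : c ≠ 0)
    (hg : Tendsto g l (𝓝 c)) : g =Θ[l] fun _ => (1 : ℝ) :=
  ((isEquivalent_const_iff_tendsto hc).2 hg).isTheta.trans (isTheta_const_const hc one_ne_zero)

/-- `g` behaves like the power `x ^ s` along `l` to first order: it has the order of magnitude of
`x ^ s`, and `x g' / g → s`. For positive `g` the second condition says that `g` is smoothly varying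
with index `s`, in the terminology of Karamata's theory. -/
structure IsPowerLike (g : ℝ → ℝ) (s : ℝ) (l : Filter ℝ) : Prop where
  eventually_differentiableAt : ∀ᶠ x in l, DifferentiableAt ℝ g x
  isTheta : g =Θ[l] fun x => x ^ s
  tendsto_mul_logDeriv : Tendsto (fun x => x * logDeriv g x) l (𝓝 s)

namespace IsPowerLike

variable {g h : ℝ → ℝ} {s t : ℝ} {l : Filter ℝ}

theorem eventually_ne_zero (hg : IsPowerLike g s l) (hl : ∀ᶠ x in l, 0 < x) :
    ∀ᶠ x in l, g x ≠ 0 := by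
  filter_upwards [hg.isTheta.eq_zero_iff, hl] with x hx hx₀
  exact mt hx.1 (Real.rpow_pos_of_pos hx₀ s).ne'

theorem congr (hg : IsPowerLike g s l) {U : Set ℝ} (hU : IsOpen U) (hUl : U ∈ l)
    (hgh : EqOn h g U) : IsPowerLike h s l := by
  have hnhds : ∀ x ∈ U, h =ᶠ[𝓝 x] g := fun x hx => hgh.eventuallyEq_of_mem (hU.mem_nhds hx)
  refine ⟨?_, (hgh.eventuallyEq_of_mem hUl).trans_isTheta hg.isTheta, ?_⟩
  · filter_upwards [hg.eventually_differentiableAt, hUl] with x hx hxU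
    exact (hnhds x hxU).differentiableAt_iff.2 hx
  · refine hg.tendsto_mul_logDeriv.congr' ?_
    filter_upwards [hUl] with x hxU
    rw [(logDeriv_congr_nhds (hnhds x hxU)).eq_of_nhds]

theorem id_rpow (s : ℝ) (hl : ∀ᶠ x in l, 0 < x) : IsPowerLike (fun x => x ^ s) s l := by
  refine ⟨?_, isTheta_rfl, tendsto_const_nhds.congr' ?_⟩
  · filter_upwards [hl] with x hx
    exact Real.differentiableAt_rpow_const_of_ne s hx.ne'
  · filter_upwards [hl] with x hx
    rw [logDeriv_apply, Real.deriv_rpow_const, Real.rpow_sub_one hx.ne']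
    field_simp

theorem of_tendsto {c : ℝ} (hc : c ≠ 0) (hd : ∀ᶠ x in l, DifferentiableAt ℝ g x)
    (hg : Tendsto g l (𝓝 c)) (hg' : Tendsto (fun x => x * deriv g x) l (𝓝 0)) :
    IsPowerLike g 0 l := by
  refine ⟨hd, ?_, ?_⟩
  · simpa using isTheta_one_of_tendsto hc hg
  · exact zero_div c ▸ (hg'.div hg hc).congr fun x => mul_div_assoc _ _ _

theorem mul (hg : IsPowerLike g s l) (hh : IsPowerLike h t l) (hl : ∀ᶠ x in l, 0 < x) :
    IsPowerLike (fun x => g x * h x) (s + t) l := by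
  refine ⟨?_, ?_, ?_⟩
  · filter_upwards [hg.eventually_differentiableAt, hh.eventually_differentiableAt] with x
    exact DifferentiableAt.mul
  · refine (hg.isTheta.mul hh.isTheta).trans_eventuallyEq ?_
    filter_upwards [hl] with x hx
    rw [Real.rpow_add hx]
  · refine (hg.tendsto_mul_logDeriv.add hh.tendsto_mul_logDeriv).congr' ?_
    filter_upwards [hg.eventually_differentiableAt, hh.eventually_differentiableAt,
      hg.eventually_ne_zero hl, hh.eventually_ne_zero hl] with x hgd hhd hg₀ hh₀
    rw [logDeriv_mul x hg₀ hh₀ hgd hhd, mul_add]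

theorem rpow (hg : IsPowerLike g s l) (hl : ∀ᶠ x in l, 0 < x) (hpos : ∀ᶠ x in l, 0 < g x)
    (r : ℝ) : IsPowerLike (fun x => g x ^ r) (s * r) l := by
  refine ⟨?_, ?_, ?_⟩
  · filter_upwards [hg.eventually_differentiableAt, hpos] with x hx hx₀
    exact hx.rpow_const (Or.inl hx₀.ne')
  · have rpow_nonneg : ∀ᶠ x in l, 0 ≤ x ^ s := hl.mono fun x hx => Real.rpow_nonneg hx.le s
    refine (hg.isTheta.rpow (hpos.mono fun x hx => hx.le) rpow_nonneg).trans_eventuallyEq ?_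
    filter_upwards [hl] with x hx
    rw [Real.rpow_mul hx.le]
  · refine (hg.tendsto_mul_logDeriv.mul_const r).congr' ?_
    filter_upwards [hg.eventually_differentiableAt, hpos] with x hx hx₀
    rw [logDeriv_apply, logDeriv_apply, (hx.hasDerivAt.rpow_const (Or.inl hx₀.ne')).deriv,
      Real.rpow_sub_one hx₀.ne']
    have := Real.rpow_pos_of_pos hx₀ r
    field_simp

theorem isTheta_deriv (hg : IsPowerLike g s l) (hl : ∀ᶠ x in l, 0 < x) (hs : s ≠ 0) :
    deriv g =Θ[l] fun x => x ^ (s - 1) := by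
  have logDeriv_isTheta : (fun x => x * logDeriv g x) =Θ[l] fun _ => (1 : ℝ) :=
    isTheta_one_of_tendsto hs hg.tendsto_mul_logDeriv
  have product := (logDeriv_isTheta.mul hg.isTheta).div (isTheta_refl (fun x : ℝ => x) l)
  refine (EventuallyEq.trans_isTheta ?_ product).trans_eventuallyEq ?_
  · filter_upwards [hl, hg.eventually_ne_zero hl] with x hx hx₀
    rw [logDeriv_apply]
    field_simp
  · filter_upwards [hl] with x hx
    rw [one_mul, Real.rpow_sub_one hx.ne']

end IsPowerLike

end PowerLike

section PowerPrimitive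

variable {F F' : ℝ → ℝ} {θ : ℝ}

theorem isTheta_rpow_nhdsGT_zero (hθ : 0 < θ) (hF : ∀ᶠ x in 𝓝[>] 0, HasDerivAt F (F' x) x)
    (hpos : ∀ᶠ x in 𝓝[>] 0, 0 ≤ F' x) (hF' : F' =Θ[𝓝[>] 0] fun x => x ^ (θ - 1))
    (hF₀ : Tendsto F (𝓝[>] 0) (𝓝 0)) : F =Θ[𝓝[>] 0] fun x => x ^ θ := by
  have pos : ∀ᶠ x : ℝ in 𝓝[>] 0, 0 < x := self_mem_nhdsWithin
  have rpow_deriv : ∀ᶠ x : ℝ in 𝓝[>] 0, HasDerivAt (fun y => y ^ θ) (θ * x ^ (θ - 1)) x :=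
    pos.mono fun x hx => Real.hasDerivAt_rpow_const (Or.inl hx.ne')
  have rpow_pos : ∀ᶠ x : ℝ in 𝓝[>] 0, 0 ≤ θ * x ^ (θ - 1) := pos.mono fun x hx => by positivity
  have hF'θ := (isTheta_const_mul_right hθ.ne').2 hF'
  exact ⟨isBigO_nhdsGT_of_isBigO_deriv hF rpow_deriv rpow_pos hF'θ.1 hF₀
      (tendsto_rpow_nhdsGT_zero hθ),
    isBigO_nhdsGT_of_isBigO_deriv rpow_deriv hF hpos hF'θ.2
      (tendsto_rpow_nhdsGT_zero hθ) hF₀⟩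

theorem isTheta_rpow_atTop (hθ : 0 < θ) (hF : ∀ᶠ x in atTop, HasDerivAt F (F' x) x)
    (hpos : ∀ᶠ x in atTop, 0 ≤ F' x) (hF' : F' =Θ[atTop] fun x => x ^ (θ - 1))
    (hF₁ : (fun _ => (1 : ℝ)) =O[atTop] F) : F =Θ[atTop] fun x => x ^ θ := by
  have pos : ∀ᶠ x : ℝ in atTop, 0 < x := eventually_gt_atTop 0
  have rpow_deriv : ∀ᶠ x : ℝ in atTop, HasDerivAt (fun y => y ^ θ) (θ * x ^ (θ - 1)) x :=
    pos.mono fun x hx => Real.hasDerivAt_rpow_const (Or.inl hx.ne')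
  have rpow_pos : ∀ᶠ x : ℝ in atTop, 0 ≤ θ * x ^ (θ - 1) := pos.mono fun x hx => by positivity
  have one_isBigO_rpow : (fun _ => (1 : ℝ)) =O[atTop] fun x : ℝ => x ^ θ :=
    ((isLittleO_one_left_iff ℝ).2 (tendsto_norm_atTop_atTop.comp (tendsto_rpow_atTop hθ))).isBigO
  have hF'θ := (isTheta_const_mul_right hθ.ne').2 hF'
  exact ⟨isBigO_atTop_of_isBigO_deriv hF rpow_deriv rpow_pos hF'θ.1 one_isBigO_rpow,
    isBigO_atTop_of_isBigO_deriv rpow_deriv hF hpos hF'θ.2 hF₁⟩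

end PowerPrimitive

section PowerBounds

/-- The two-sided estimates of the theorem at the point `x`: up to the factor `C`, the values of
`k`, `k'` and `|k''|` are `x ^ θ`, `x ^ (θ - 1)` and `x ^ (θ - 2)`. -/
def HasPowerBoundsAt (k : ℝ → ℝ) (θ C x : ℝ) : Prop :=
  C⁻¹ * x ^ θ ≤ k x ∧ k x ≤ C * x ^ θ ∧
  C⁻¹ * x ^ (θ - 1) ≤ deriv k x ∧ deriv k x ≤ C * x ^ (θ - 1) ∧
  C⁻¹ * x ^ (θ - 2) ≤ |deriv (deriv k) x| ∧ |deriv (deriv k) x| ≤ C * x ^ (θ - 2)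

theorem eventually_bounds_of_isTheta {α : Type*} {l : Filter α} {f g : α → ℝ} (h : f =Θ[l] g)
    (hg : ∀ᶠ x in l, 0 ≤ g x) :
    ∀ᶠ C in atTop, ∀ᶠ x in l, C⁻¹ * g x ≤ |f x| ∧ |f x| ≤ C * g x := by
  filter_upwards [isBigO_iff_eventually.1 h.1, isBigO_iff_eventually.1 h.2,
    eventually_gt_atTop 0] with C hfg hgf hC
  filter_upwards [hfg, hgf, hg] with x hfg hgf hg
  simp only [Real.norm_eq_abs, abs_of_nonneg hg] at hfg hgf
  exact ⟨(inv_mul_le_iff₀ hC).2 hgf, hfg⟩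

theorem eventually_hasPowerBoundsAt {k : ℝ → ℝ} {θ : ℝ} {l : Filter ℝ} (hl : ∀ᶠ x in l, 0 < x)
    (hk : k =Θ[l] fun x => x ^ θ) (hk' : IsPowerLike (deriv k) (θ - 1) l) (hθ : θ ≠ 1)
    (hk₀ : ∀ᶠ x in l, 0 ≤ k x) (hk'₀ : ∀ᶠ x in l, 0 ≤ deriv k x) :
    ∀ᶠ C in atTop, ∀ᶠ x in l, HasPowerBoundsAt k θ C x := by
  have hk'' : deriv (deriv k) =Θ[l] fun x => x ^ (θ - 2) := by
    simpa only [sub_sub, one_add_one_eq_two] using hk'.isTheta_deriv hl (sub_ne_zero.2 hθ)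
  have rpow_nonneg (r : ℝ) : ∀ᶠ x in l, 0 ≤ x ^ r := hl.mono fun x hx => Real.rpow_nonneg hx.le r
  filter_upwards [eventually_bounds_of_isTheta hk (rpow_nonneg _),
    eventually_bounds_of_isTheta hk'.isTheta (rpow_nonneg _),
    eventually_bounds_of_isTheta hk'' (rpow_nonneg _)] with C h₀ h₁ h₂
  filter_upwards [h₀, h₁, h₂, hk₀, hk'₀] with x h₀ h₁ h₂ hkx hk'x
  rw [abs_of_nonneg hkx] at h₀
  rw [abs_of_nonneg hk'x] at h₁
  exact ⟨h₀.1, h₀.2, h₁.1, h₁.2, h₂⟩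

end PowerBounds

section Integral

variable {E : Type*} [NormedAddCommGroup E] {g : ℝ → E}

theorem intervalIntegrable_of_isBigO_rpow {r : ℝ} (hr : -1 < r) (hg : ContinuousOn g (Ioi 0))
    (h : g =O[𝓝[>] 0] fun x => x ^ r) {b : ℝ} (hb : 0 < b) : IntervalIntegrable g volume 0 b := by
  have rpow_integrable : IntegrableAtFilter (fun x : ℝ => x ^ r) (𝓝[>] 0) :=
    ⟨Ioo 0 1, Ioo_mem_nhdsGT one_pos,
      (intervalIntegral.integrableOn_Ioo_rpow_iff one_pos).2 hr⟩
  have measurable : StronglyMeasurableAtFilter g (𝓝[>] 0) :=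
    ⟨Ioi 0, self_mem_nhdsWithin, hg.aestronglyMeasurable measurableSet_Ioi⟩
  obtain ⟨s, hs, hgs⟩ := h.integrableAtFilter measurable rpow_integrable
  obtain ⟨δ, hδ, hδs⟩ := mem_nhdsGT_iff_exists_Ioc_subset.1 hs
  have near_zero : IntervalIntegrable g volume 0 δ :=
    (intervalIntegrable_iff_integrableOn_Ioc_of_le (le_of_lt hδ)).2 (hgs.mono_set hδs)
  refine near_zero.trans (hg.mono fun x hx => ?_).intervalIntegrable
  exact (lt_min hδ hb).trans_le hx.1

variable [NormedSpace ℝ E]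

theorem hasDerivAt_integral_of_continuousOn_Ioi [CompleteSpace E] (hg : ContinuousOn g (Ioi 0))
    {x : ℝ} (hint : IntervalIntegrable g volume 0 x) (hx : 0 < x) :
    HasDerivAt (fun u => ∫ y in 0..u, g y) (g x) x :=
  intervalIntegral.integral_hasDerivAt_right hint
    (hg.stronglyMeasurableAtFilter isOpen_Ioi x hx) (hg.continuousAt (Ioi_mem_nhds hx))

theorem tendsto_integral_nhdsGT {a b : ℝ} (hab : a < b) (hint : IntervalIntegrable g volume a b) :
    Tendsto (fun u => ∫ y in a..u, g y) (𝓝[>] a) (𝓝 0) := by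
  have continuous := intervalIntegral.continuousOn_primitive_interval' hint left_mem_uIcc
  rw [uIcc_of_le hab.le] at continuous
  simpa using ((continuous a (left_mem_Icc.2 hab.le)).tendsto).mono_left
    (nhdsWithin_le_of_mem (Icc_mem_nhdsGT hab))

variable {f : ℝ → ℝ} {θ : ℝ}

theorem one_isBigO_integral_atTop (hpos : ∀ x, 0 < x → 0 < f x)
    (hint : ∀ b, 0 < b → IntervalIntegrable f volume 0 b) :
    (fun _ => (1 : ℝ)) =O[atTop] fun u => ∫ y in 0..u, f y := by
  refine (isBigO_const_left_iff_pos_le_norm one_ne_zero).2 ⟨∫ y in 0..1, f y,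
    intervalIntegral.intervalIntegral_pos_of_pos_on (hint 1 one_pos) (fun x hx => hpos x hx.1)
      one_pos, ?_⟩
  filter_upwards [eventually_ge_atTop 1] with x hx
  refine (intervalIntegral.integral_mono_interval le_rfl zero_le_one hx ?_
    (hint x (by linarith))).trans (Real.le_norm_self _)
  filter_upwards [ae_restrict_mem measurableSet_Ioc] with y hy using (hpos y hy.1).le

theorem eventually_hasPowerBoundsAt_integral {l : Filter ℝ} (hl : ∀ᶠ x in l, 0 < x)
    (hf : ContinuousOn f (Ioi 0)) (hpos : ∀ x, 0 < x → 0 < f x)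
    (hint : ∀ b, 0 < b → IntervalIntegrable f volume 0 b) (hfθ : IsPowerLike f (θ - 1) l)
    (hθ : θ ≠ 1) (hF : (fun u => ∫ y in 0..u, f y) =Θ[l] fun x => x ^ θ) :
    ∀ᶠ C in atTop, ∀ᶠ x in l, HasPowerBoundsAt (fun u => ∫ y in 0..u, f y) θ C x := by
  have deriv_eq : EqOn (deriv fun u => ∫ y in 0..u, f y) f (Ioi 0) := fun x hx =>
    (hasDerivAt_integral_of_continuousOn_Ioi hf (hint x hx) hx).deriv
  refine eventually_hasPowerBoundsAt hl hF (hfθ.congr isOpen_Ioi hl deriv_eq) hθ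
    (hl.mono fun x hx => ?_) (hl.mono fun x hx => (deriv_eq hx).symm ▸ (hpos x hx).le)
  exact (intervalIntegral.intervalIntegral_pos_of_pos_on (hint x hx)
    (fun y hy => hpos y hy.1) hx).le

theorem eventually_hasPowerBoundsAt_integral_nhdsGT_zero (hf : ContinuousOn f (Ioi 0))
    (hpos : ∀ x, 0 < x → 0 < f x) (hint : ∀ b, 0 < b → IntervalIntegrable f volume 0 b)
    (hfθ : IsPowerLike f (θ - 1) (𝓝[>] 0)) (hθ₀ : 0 < θ) (hθ₁ : θ ≠ 1) :
    ∀ᶠ C in atTop, ∀ᶠ x in 𝓝[>] 0, HasPowerBoundsAt (fun u => ∫ y in 0..u, f y) θ C x := by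
  have pos : ∀ᶠ x : ℝ in 𝓝[>] 0, 0 < x := self_mem_nhdsWithin
  exact eventually_hasPowerBoundsAt_integral pos hf hpos hint hfθ hθ₁ <|
    isTheta_rpow_nhdsGT_zero hθ₀
      (pos.mono fun x hx => hasDerivAt_integral_of_continuousOn_Ioi hf (hint x hx) hx)
      (pos.mono fun x hx => (hpos x hx).le) hfθ.isTheta
      (tendsto_integral_nhdsGT one_pos (hint 1 one_pos))

theorem eventually_hasPowerBoundsAt_integral_atTop (hf : ContinuousOn f (Ioi 0))
    (hpos : ∀ x, 0 < x → 0 < f x) (hint : ∀ b, 0 < b → IntervalIntegrable f volume 0 b)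
    (hfθ : IsPowerLike f (θ - 1) atTop) (hθ₀ : 0 < θ) (hθ₁ : θ ≠ 1) :
    ∀ᶠ C in atTop, ∀ᶠ x in atTop, HasPowerBoundsAt (fun u => ∫ y in 0..u, f y) θ C x := by
  have pos : ∀ᶠ x : ℝ in atTop, 0 < x := eventually_gt_atTop 0
  exact eventually_hasPowerBoundsAt_integral pos hf hpos hint hfθ hθ₁ <|
    isTheta_rpow_atTop hθ₀
      (pos.mono fun x hx => hasDerivAt_integral_of_continuousOn_Ioi hf (hint x hx) hx)
      (pos.mono fun x hx => (hpos x hx).le) hfθ.isTheta (one_isBigO_integral_atTop hpos hint)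

end Integral

section Pressure

/-- `k(ρ) = ∫₀^ρ √(P'(y)) / y dy`, the integral of the relative sound speed of a gas with pressure
law `P`; the Riemann invariants of isentropic flow are `u ± k(ρ)`. -/
noncomputable def soundIntegral (P : ℝ → ℝ) (ρ : ℝ) : ℝ :=
  ∫ y in 0..ρ, √(deriv P y) / y

variable {P Q : ℝ → ℝ} {κ γ : ℝ} {l : Filter ℝ} {U : Set ℝ}

theorem contDiffOn_of_eqOn_rpow_mul_one_add {n : WithTop ℕ∞} (hU : U ⊆ Ioi 0) (hκ : κ ≠ 0)
    (hP : ContDiffOn ℝ n P U) (hPQ : ∀ x ∈ U, P x = κ * x ^ γ * (1 + Q x)) :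
    ContDiffOn ℝ n Q U := by
  have power : ContDiffOn ℝ n (fun x : ℝ => κ * x ^ γ) U :=
    contDiffOn_const.mul (contDiffOn_id.rpow_const_of_ne fun x hx => (hU hx).ne')
  have power_ne : ∀ x ∈ U, κ * x ^ γ ≠ 0 := fun x hx =>
    mul_ne_zero hκ (Real.rpow_pos_of_pos (hU hx) γ).ne'
  refine ((hP.div power power_ne).sub (contDiffOn_const (c := (1 : ℝ)))).congr fun x hx => ?_
  rw [Pi.div_apply, hPQ x hx, mul_div_cancel_left₀ _ (power_ne x hx), add_sub_cancel_left]

theorem deriv_rpow_mul_one_add (hU : IsOpen U) (hU₀ : U ⊆ Ioi 0) (hQ : DifferentiableOn ℝ Q U)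
    (hPQ : ∀ x ∈ U, P x = κ * x ^ γ * (1 + Q x)) :
    EqOn (deriv P) (fun x => x ^ (γ - 1) * (κ * (γ * (1 + Q x) + x * deriv Q x))) U := by
  intro x hx
  have hx₀ : x ≠ 0 := (hU₀ hx).ne'
  have hQx := (hQ.differentiableAt (hU.mem_nhds hx)).hasDerivAt
  have hprod := ((Real.hasDerivAt_rpow_const (p := γ) (Or.inl hx₀)).const_mul κ).mul
    (hQx.const_add 1)
  rw [(EqOn.eventuallyEq_of_mem hPQ (hU.mem_nhds hx)).deriv_eq]
  refine hprod.deriv.trans ?_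
  beta_reduce
  rw [Real.rpow_sub_one hx₀]
  field_simp

theorem tendsto_pow_mul_of_abs_le_rpow_sub {q : ℝ → ℝ} {C α : ℝ} {j : ℕ} (hl : ∀ᶠ x in l, 0 < x)
    (hα : Tendsto (fun x => x ^ α) l (𝓝 0)) (hq : ∀ᶠ x in l, |q x| ≤ C * x ^ (α - j)) :
    Tendsto (fun x => x ^ j * q x) l (𝓝 0) := by
  refine squeeze_zero_norm' ?_ (by simpa using hα.const_mul C)
  filter_upwards [hl, hq] with x hx hqx
  calc ‖x ^ j * q x‖ = x ^ j * |q x| := by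
        rw [Real.norm_eq_abs, abs_mul, abs_of_pos (pow_pos hx j)]
    _ ≤ x ^ j * (C * x ^ (α - j)) := by gcongr
    _ = C * x ^ α := by rw [Real.rpow_sub_natCast hx.ne']; field_simp

theorem isPowerLike_const_mul_one_add (hU : IsOpen U) (hUl : U ∈ l) (hκ : κ ≠ 0) (hγ : γ ≠ 0)
    (hQ : ContDiffOn ℝ 2 Q U) (hQ₀ : Tendsto Q l (𝓝 0))
    (hQ₁ : Tendsto (fun x => x * deriv Q x) l (𝓝 0))
    (hQ₂ : Tendsto (fun x => x ^ 2 * deriv (deriv Q) x) l (𝓝 0)) :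
    IsPowerLike (fun x => κ * (γ * (1 + Q x) + x * deriv Q x)) 0 l := by
  have hQ' : DifferentiableOn ℝ (deriv Q) U :=
    (hQ.deriv_of_isOpen (m := 1) hU one_add_one_eq_two.le).differentiableOn one_ne_zero
  have hderiv : ∀ x ∈ U, HasDerivAt (fun x => κ * (γ * (1 + Q x) + x * deriv Q x))
      (κ * ((γ + 1) * deriv Q x + x * deriv (deriv Q) x)) x := fun x hx => by
    have hQx := ((hQ.differentiableOn two_ne_zero).differentiableAt (hU.mem_nhds hx)).hasDerivAt
    have hQ'x := (hQ'.differentiableAt (hU.mem_nhds hx)).hasDerivAt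
    exact ((((hQx.const_add 1).const_mul γ).add ((hasDerivAt_id' x).mul hQ'x)).const_mul
      κ).congr_deriv (by ring)
  refine .of_tendsto (mul_ne_zero hκ hγ)
    (eventually_of_mem hUl fun x hx => (hderiv x hx).differentiableAt) ?_ ?_
  · simpa using (((hQ₀.const_add 1).const_mul γ).add hQ₁).const_mul κ
  · have limit : Tendsto (fun x => κ * ((γ + 1) * (x * deriv Q x) + x ^ 2 * deriv (deriv Q) x)) l
        (𝓝 0) := by simpa using ((hQ₁.const_mul (γ + 1)).add hQ₂).const_mul κ
    refine limit.congr' (eventually_of_mem hUl fun x hx => ?_)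
    beta_reduce
    rw [(hderiv x hx).deriv]
    ring

theorem isPowerLike_deriv_of_expansion {C α : ℝ} (hU : IsOpen U) (hU₀ : U ⊆ Ioi 0) (hUl : U ∈ l)
    (hP : ContDiffOn ℝ 2 P U) (hκ : κ ≠ 0) (hγ : γ ≠ 0)
    (hPQ : ∀ x ∈ U, P x = κ * x ^ γ * (1 + Q x)) (hα : Tendsto (fun x => x ^ α) l (𝓝 0))
    (hQ : ∀ x ∈ U, ∀ j : ℕ, j ≤ 2 → |iteratedDeriv j Q x| ≤ C * x ^ (α - j)) :
    IsPowerLike (deriv P) (γ - 1) l := by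
  have hl : ∀ᶠ x in l, 0 < x := mem_of_superset hUl hU₀
  have scaled (j : ℕ) (hj : j ≤ 2) : Tendsto (fun x => x ^ j * iteratedDeriv j Q x) l (𝓝 0) :=
    tendsto_pow_mul_of_abs_le_rpow_sub hl hα (eventually_of_mem hUl fun x hx => hQ x hx j hj)
  have hQC := contDiffOn_of_eqOn_rpow_mul_one_add hU₀ hκ hP hPQ
  have factor := isPowerLike_const_mul_one_add hU hUl hκ hγ hQC (by simpa using scaled 0 (by lia))
    (by simpa using scaled 1 (by lia)) (by simpa [iteratedDeriv_succ] using scaled 2 le_rfl)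
  have product := (IsPowerLike.id_rpow (γ - 1) hl).mul factor hl
  rw [add_zero] at product
  exact product.congr hU hUl
    (deriv_rpow_mul_one_add hU hU₀ (hQC.differentiableOn two_ne_zero) hPQ)

theorem isPowerLike_sqrt_div {g : ℝ → ℝ} {s : ℝ} (hl : ∀ᶠ x in l, 0 < x)
    (hpos : ∀ᶠ x in l, 0 < g x) (hg : IsPowerLike g s l) :
    IsPowerLike (fun x => √(g x) / x) (s / 2 - 1) l := by
  have product := (hg.rpow hl hpos (1 / 2)).mul (.id_rpow (-1) hl) hl
  rw [mul_one_div, ← sub_eq_add_neg] at product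
  refine product.congr isOpen_univ univ_mem fun x _ => ?_
  beta_reduce
  rw [Real.sqrt_eq_rpow, Real.rpow_neg_one, div_eq_mul_inv]

theorem isPowerLike_sqrt_deriv_div_of_expansion {C α : ℝ} (hU : IsOpen U) (hU₀ : U ⊆ Ioi 0)
    (hUl : U ∈ l) (hP : ContDiffOn ℝ 2 P (Ioi 0)) (hP' : ∀ x, 0 < x → 0 < deriv P x) (hκ : κ ≠ 0)
    (hγ : γ ≠ 0) (hPQ : ∀ x ∈ U, P x = κ * x ^ γ * (1 + Q x))
    (hα : Tendsto (fun x => x ^ α) l (𝓝 0))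
    (hQ : ∀ x ∈ U, ∀ j : ℕ, j ≤ 2 → |iteratedDeriv j Q x| ≤ C * x ^ (α - j)) :
    IsPowerLike (fun y => √(deriv P y) / y) ((γ - 1) / 2 - 1) l :=
  isPowerLike_sqrt_div (mem_of_superset hUl hU₀) (eventually_of_mem hUl fun x hx => hP' x (hU₀ hx))
    (isPowerLike_deriv_of_expansion hU hU₀ hUl (hP.mono hU₀) hκ hγ hPQ hα hQ)

theorem continuousOn_sqrt_deriv_div (hP : ContDiffOn ℝ 2 P (Ioi 0)) :
    ContinuousOn (fun y => √(deriv P y) / y) (Ioi 0) :=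
  (hP.continuousOn_deriv_of_isOpen isOpen_Ioi one_le_two).sqrt.div continuousOn_id
    fun _ hx => ne_of_gt hx

end Pressure

theorem k_function_bounds_general
    (P Q₁ Q₂ : ℝ → ℝ) (ρstar ρss γ₁ γ₂ κ₁ κ₂ Cs Css α β : ℝ)
    (hP : ContDiffOn ℝ 2 P (Ioi 0)) (hP' : ∀ ρ, 0 < ρ → 0 < deriv P ρ)
    (hρstar : 0 < ρstar) (hγ₁ : 1 < γ₁) (hγ₁3 : γ₁ ≠ 3) (hκ₁ : κ₁ ≠ 0) (hα : 0 < α)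
    (hPsmall : ∀ ρ ∈ Ioo 0 ρstar, P ρ = κ₁ * ρ ^ γ₁ * (1 + Q₁ ρ))
    (hQ₁ : ∀ ρ ∈ Ioo 0 ρstar, ∀ j : ℕ, j ≤ 2 → |iteratedDeriv j Q₁ ρ| ≤ Cs * ρ ^ (α - j))
    (hγ₂ : 1 < γ₂) (hγ₂3 : γ₂ ≠ 3) (hκ₂ : κ₂ ≠ 0) (hβ : 0 < β)
    (hPlarge : ∀ ρ, ρss ≤ ρ → P ρ = κ₂ * ρ ^ γ₂ * (1 + Q₂ ρ))
    (hQ₂ : ∀ ρ, ρss ≤ ρ → ∀ j : ℕ, j ≤ 2 → |iteratedDeriv j Q₂ ρ| ≤ Css * ρ ^ (-β - j)) :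
    (∀ ρ, 0 < ρ → IntervalIntegrable (fun y => √(deriv P y) / y) volume 0 ρ) ∧
      ∃ ρb₁ ∈ Ioc 0 ρstar, ∃ ρb₂, ρss ≤ ρb₂ ∧ ∃ C, 0 < C ∧
        (∀ ρ ∈ Ioc 0 ρb₁, HasPowerBoundsAt (soundIntegral P) ((γ₁ - 1) / 2) C ρ) ∧
        ∀ ρ, ρb₂ ≤ ρ → HasPowerBoundsAt (soundIntegral P) ((γ₂ - 1) / 2) C ρ := by
  have hf := continuousOn_sqrt_deriv_div hP
  have hpos : ∀ y, 0 < y → 0 < √(deriv P y) / y := fun y hy =>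
    div_pos (Real.sqrt_pos.2 (hP' y hy)) hy
  have power_zero : IsPowerLike (fun y => √(deriv P y) / y) ((γ₁ - 1) / 2 - 1) (𝓝[>] 0) :=
    isPowerLike_sqrt_deriv_div_of_expansion isOpen_Ioo Ioo_subset_Ioi_self (Ioo_mem_nhdsGT hρstar)
      hP hP' hκ₁ (by linarith) hPsmall (tendsto_rpow_nhdsGT_zero hα) hQ₁
  have power_top : IsPowerLike (fun y => √(deriv P y) / y) ((γ₂ - 1) / 2 - 1) atTop :=
    isPowerLike_sqrt_deriv_div_of_expansion isOpen_Ioi (Ioi_subset_Ioi (le_max_right ρss 0))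
      (Ioi_mem_atTop _) hP hP' hκ₂ (by linarith) (fun x hx => hPlarge x (le_of_max_le_left hx.le))
      (tendsto_rpow_neg_atTop hβ) (fun x hx => hQ₂ x (le_of_max_le_left hx.le))
  have hint : ∀ ρ, 0 < ρ → IntervalIntegrable (fun y => √(deriv P y) / y) volume 0 ρ := fun ρ =>
    intervalIntegrable_of_isBigO_rpow (by linarith) hf power_zero.isTheta.1
  have bounds_zero := eventually_hasPowerBoundsAt_integral_nhdsGT_zero hf hpos hint power_zero
    (by linarith) (by contrapose! hγ₁3; linarith)
  have bounds_top := eventually_hasPowerBoundsAt_integral_atTop hf hpos hint power_top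
    (by linarith) (by contrapose! hγ₂3; linarith)
  obtain ⟨C, hC, hC₁, hC₂⟩ := ((eventually_gt_atTop 0).and (bounds_zero.and bounds_top)).exists
  obtain ⟨r₁, hr₁, hk₁⟩ := mem_nhdsGT_iff_exists_Ioc_subset.1 hC₁
  obtain ⟨r₂, hk₂⟩ := eventually_atTop.1 hC₂
  exact ⟨hint, min r₁ ρstar, ⟨lt_min hr₁ hρstar, min_le_right _ _⟩, max r₂ ρss, le_max_right _ _,
    C, hC, fun ρ hρ => hk₁ ⟨hρ.1, hρ.2.trans (min_le_left _ _)⟩,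
    fun ρ hρ => hk₂ ρ ((le_max_left _ _).trans hρ)⟩

theorem k_function_bounds
    (P Q₁ Q₂ : ℝ → ℝ) (ρstar ρss γ₁ γ₂ κ₁ κ₂ Cs Css εe : ℝ)
    (hPC1 : ContDiffOn ℝ 1 P (Ici 0))
    (hPC4 : ContDiffOn ℝ 4 P (Ioi 0))
    (hH1 : ∀ ρ : ℝ, 0 < ρ → 0 < deriv P ρ ∧ 0 < 2 * deriv P ρ + ρ * deriv (deriv P) ρ)
    (hρstar : 0 < ρstar) (hγ₁ : 1 < γ₁) (hγ₁3 : γ₁ < 3) (hκ₁ : 0 < κ₁) (hCs : 0 < Cs)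
    (hQ₁C4 : ContDiffOn ℝ 4 Q₁ (Ioi 0))
    (hPsmall : ∀ ρ ∈ Ico (0:ℝ) ρstar, P ρ = κ₁ * ρ ^ γ₁ * (1 + Q₁ ρ))
    (hQ₁bd : ∀ ρ ∈ Ioo (0:ℝ) ρstar, ∀ j : ℕ, j ≤ 4 →
      |iteratedDeriv j Q₁ ρ| ≤ Cs * ρ ^ (γ₁ - 1 - (j : ℝ)))
    (hρss : ρstar < ρss) (hγ₂ : 6/5 < γ₂) (hγ₂1 : γ₂ ≤ γ₁) (hκ₂ : 0 < κ₂)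
    (hεe : 0 < εe) (hCss : 0 < Css)
    (hQ₂C4 : ContDiffOn ℝ 4 Q₂ (Ioi 0))
    (hPlarge : ∀ ρ : ℝ, ρss ≤ ρ → P ρ = κ₂ * ρ ^ γ₂ * (1 + Q₂ ρ))
    (hQ₂bd : ∀ ρ : ℝ, ρss ≤ ρ → ∀ j : ℕ, j ≤ 4 →
      |iteratedDeriv j Q₂ ρ| ≤ Css * ρ ^ (-εe - (j : ℝ))) :
    ∀ k : ℝ → ℝ, (∀ ρ : ℝ, k ρ = ∫ y in (0:ℝ)..ρ, Real.sqrt (deriv P y) / y) →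
      (∀ ρ : ℝ, 0 < ρ → IntervalIntegrable (fun y => Real.sqrt (deriv P y) / y) volume 0 ρ) ∧
      (∃ ρb₁ ∈ Ioc (0:ℝ) ρstar, ∃ ρb₂ : ℝ, ρss ≤ ρb₂ ∧ ∃ C : ℝ, 0 < C ∧
        (∀ ρ ∈ Ioc (0:ℝ) ρb₁,
          C⁻¹ * ρ ^ ((γ₁ - 1) / 2) ≤ k ρ ∧ k ρ ≤ C * ρ ^ ((γ₁ - 1) / 2) ∧
          C⁻¹ * ρ ^ ((γ₁ - 1) / 2 - 1) ≤ deriv k ρ ∧ deriv k ρ ≤ C * ρ ^ ((γ₁ - 1) / 2 - 1) ∧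
          C⁻¹ * ρ ^ ((γ₁ - 1) / 2 - 2) ≤ |deriv (deriv k) ρ| ∧
            |deriv (deriv k) ρ| ≤ C * ρ ^ ((γ₁ - 1) / 2 - 2)) ∧
        (∀ ρ : ℝ, ρb₂ ≤ ρ →
          C⁻¹ * ρ ^ ((γ₂ - 1) / 2) ≤ k ρ ∧ k ρ ≤ C * ρ ^ ((γ₂ - 1) / 2) ∧
          C⁻¹ * ρ ^ ((γ₂ - 1) / 2 - 1) ≤ deriv k ρ ∧ deriv k ρ ≤ C * ρ ^ ((γ₂ - 1) / 2 - 1) ∧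
          C⁻¹ * ρ ^ ((γ₂ - 1) / 2 - 2) ≤ |deriv (deriv k) ρ| ∧
            |deriv (deriv k) ρ| ≤ C * ρ ^ ((γ₂ - 1) / 2 - 2))) := by
  intro k hk
  obtain rfl : k = soundIntegral P := funext hk
  exact k_function_bounds_general P Q₁ Q₂ ρstar ρss γ₁ γ₂ κ₁ κ₂ Cs Css (γ₁ - 1) εe
    (hPC4.of_le (by norm_num)) (fun ρ hρ => (hH1 ρ hρ).1) hρstar hγ₁ hγ₁3.ne hκ₁.ne' (by linarith)
    (fun ρ hρ => hPsmall ρ ⟨hρ.1.le, hρ.2⟩) (fun ρ hρ j hj => hQ₁bd ρ hρ j (by lia))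
    (by linarith) (by linarith) hκ₂.ne' hεe hPlarge (fun ρ hρ j hj => hQ₂bd ρ hρ j (by lia))
end

section
/- Under the hypotheses (H1)–(H3) on the pressure P, with k(ρ) = ∫₀^ρ √(P'(y))/y dy, the identity ρ k''(ρ)/k'(ρ) = ρ P''(ρ)/(2P'(ρ)) − 1 holds for every ρ > 0. Moreover there exist a constant ν ∈ (0,1) and thresholds ρ̄₁ ∈ (0, ρ_*], ρ̄₂ ≥ ρ^* such that: for all ρ ∈ (0, ρ̄₁], ((3γ₁−1)(γ₁−1)/(γ₁+5)) P'(ρ) ≤ ρ P''(ρ) ≤ ((5+γ₁)(γ₁−1)/(3γ₁−1)) P'(ρ) < 2P'(ρ); for all ρ ≥ ρ̄₂, ((3γ₁−1)(γ₂−1)/(γ₁+5)) P'(ρ) ≤ ρ P''(ρ) ≤ ((5+γ₁)(γ₂−1)/(3γ₁−1)) P'(ρ) < 2P'(ρ); and consequently 0 < |ρ k''(ρ)/k'(ρ)| ≤ ν for all ρ ∈ (0, ρ̄₁] ∪ [ρ̄₂, ∞). -/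
open Set MeasureTheory Filter

/-! The elasticity `ρ f'(ρ) / f(ρ)` turns products into sums and powers `ρ ^ a` into the constant
`a`. Since `k' = √P' / ρ`, the elasticity of `k'` is half that of `P'` minus `1`. Writing
`P' = κ ρ ^ (γ - 1) (γ (1 + Q) + ρ Q')`, the bounds on the perturbation `Q` make the last factor
tend to `γ` and its elasticity tend to `0`, so the elasticity of `P'` tends to `γ - 1`; all the
inequalities are then strict inequalities between limits. At the origin a positive limit also forces
`P'` below a positive power of `ρ`, which is why the integral defining `k` converges. -/

open Topology Asymptotics

section Elasticity

variable {f g : ℝ → ℝ} {x : ℝ}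

/-- The elasticity `x f'(x) / f(x)` of a function at a point, that is, its local power-law exponent.
Since `y / 0 = 0`, it is `0` where `f` vanishes. -/
noncomputable def elasticity (f : ℝ → ℝ) (x : ℝ) : ℝ := x * deriv f x / f x

lemma elasticity_eq_mul_logDeriv (f : ℝ → ℝ) (x : ℝ) : elasticity f x = x * logDeriv f x :=
  mul_div_assoc _ _ _

lemma elasticity_congr (h : f =ᶠ[𝓝 x] g) : elasticity f x = elasticity g x := by
  rw [elasticity_eq_mul_logDeriv, elasticity_eq_mul_logDeriv, (logDeriv_congr_nhds h).eq_of_nhds]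

lemma elasticity_const_mul {c : ℝ} (hc : c ≠ 0) :
    elasticity (fun y ↦ c * f y) x = elasticity f x := by
  rw [elasticity_eq_mul_logDeriv, logDeriv_const_mul x c hc, elasticity_eq_mul_logDeriv]

lemma elasticity_mul (hf₀ : f x ≠ 0) (hg₀ : g x ≠ 0) (hf : DifferentiableAt ℝ f x)
    (hg : DifferentiableAt ℝ g x) :
    elasticity (fun y ↦ f y * g y) x = elasticity f x + elasticity g x := by
  simp only [elasticity_eq_mul_logDeriv, logDeriv_mul x hf₀ hg₀ hf hg, mul_add]

lemma elasticity_div (hf₀ : f x ≠ 0) (hg₀ : g x ≠ 0) (hf : DifferentiableAt ℝ f x)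
    (hg : DifferentiableAt ℝ g x) :
    elasticity (fun y ↦ f y / g y) x = elasticity f x - elasticity g x := by
  simp only [elasticity_eq_mul_logDeriv, logDeriv_div x hf₀ hg₀ hf hg, mul_sub]

lemma elasticity_id (hx : x ≠ 0) : elasticity (fun y ↦ y) x = 1 := by
  rw [elasticity_eq_mul_logDeriv, logDeriv_id', mul_one_div_cancel hx]

lemma elasticity_rpow_const (hx : 0 < x) (a : ℝ) : elasticity (fun y ↦ y ^ a) x = a := by
  rw [elasticity, Real.deriv_rpow_const, Real.rpow_sub_one hx.ne']
  field_simp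

lemma elasticity_sqrt (hf₀ : 0 < f x) (hf : DifferentiableAt ℝ f x) :
    elasticity (fun y ↦ √(f y)) x = elasticity f x / 2 := by
  rw [elasticity, elasticity, deriv_sqrt hf hf₀.ne']
  field_simp
  rw [Real.sq_sqrt hf₀.le]

lemma elasticity_sqrt_div (hx : x ≠ 0) (hf₀ : 0 < f x) (hf : DifferentiableAt ℝ f x) :
    elasticity (fun y ↦ √(f y) / y) x = elasticity f x / 2 - 1 := by
  rw [elasticity_div (f := fun y ↦ √(f y)) (Real.sqrt_pos.2 hf₀).ne' hx (hf.sqrt hf₀.ne')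
      differentiableAt_fun_id,
    elasticity_sqrt hf₀ hf, elasticity_id hx]

lemma eventually_mul_le_mul_deriv_le_mul {l : Filter ℝ} {a b e : ℝ} (hf : ∀ᶠ x in l, 0 < f x)
    (he : Tendsto (elasticity f) l (𝓝 e)) (ha : a < e) (hb : e < b) :
    ∀ᶠ x in l, a * f x ≤ x * deriv f x ∧ x * deriv f x ≤ b * f x := by
  filter_upwards [hf, he.eventually_const_lt ha, he.eventually_lt_const hb] with x hx hax hbx
  exact ⟨((lt_div_iff₀ hx).1 hax).le, ((div_lt_iff₀ hx).1 hbx).le⟩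

end Elasticity

section ImproperPrimitive

variable {E : Type*} [NormedAddCommGroup E] {f k : ℝ → E}

lemma intervalIntegrable_of_integrableAtFilter (hf : ContinuousOn f (Ioi 0))
    (hint : IntegrableAtFilter f (𝓝[>] 0)) {x : ℝ} (hx : 0 < x) :
    IntervalIntegrable f volume 0 x := by
  obtain ⟨s, hs, hfs⟩ := hint
  obtain ⟨u, hu₀, hu⟩ := mem_nhdsGT_iff_exists_Ioc_subset.1 hs
  have near : IntervalIntegrable f volume 0 u :=
    (intervalIntegrable_iff_integrableOn_Ioc_of_le (le_of_lt hu₀)).2 (hfs.mono_set hu)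
  have away : IntervalIntegrable f volume u x :=
    (hf.mono fun y hy ↦ (lt_min hu₀ hx).trans_le hy.1).intervalIntegrable
  exact near.trans away

lemma deriv_eqOn_of_eq_integral [NormedSpace ℝ E] [CompleteSpace E] (hf : ContinuousOn f (Ioi 0))
    (hint : IntegrableAtFilter f (𝓝[>] 0)) (hk : ∀ x, 0 < x → k x = ∫ y in 0..x, f y) :
    EqOn (deriv k) f (Ioi 0) := by
  intro x hx
  have hloc : k =ᶠ[𝓝 x] fun x ↦ ∫ y in 0..x, f y := eventually_of_mem (Ioi_mem_nhds hx) hk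
  rw [hloc.deriv_eq]
  exact (intervalIntegral.integral_hasDerivAt_right
    (intervalIntegrable_of_integrableAtFilter hf hint hx)
    (hf.stronglyMeasurableAtFilter isOpen_Ioi x hx) (hf.continuousAt (Ioi_mem_nhds hx))).deriv

end ImproperPrimitive

section IntegralPotential

variable {p k : ℝ → ℝ}

lemma monotoneOn_mul_rpow_neg {a u : ℝ} (hp : ∀ x ∈ Ioc 0 u, DifferentiableAt ℝ p x)
    (h : ∀ x ∈ Ioo 0 u, a * p x ≤ x * deriv p x) :
    MonotoneOn (fun x ↦ p x * x ^ (-a)) (Ioc 0 u) := by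
  have hderiv (x : ℝ) (hx : x ∈ Ioc 0 u) : HasDerivAt (fun x ↦ p x * x ^ (-a))
      (deriv p x * x ^ (-a) + p x * (-a * x ^ (-a - 1))) x :=
    (hp x hx).hasDerivAt.mul (Real.hasDerivAt_rpow_const (Or.inl hx.1.ne'))
  refine monotoneOn_of_deriv_nonneg (convex_Ioc 0 u)
    (fun x hx ↦ (hderiv x hx).continuousAt.continuousWithinAt) ?_ ?_ <;> rw [interior_Ioc]
  · exact fun x hx ↦
      (hderiv x (Ioo_subset_Ioc_self hx)).differentiableAt.differentiableWithinAt
  · intro x hx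
    have factored : deriv p x * x ^ (-a) + p x * (-a * x ^ (-a - 1)) =
        x ^ (-a - 1) * (x * deriv p x - a * p x) := by
      have hx₀ : x ≠ 0 := hx.1.ne'
      rw [Real.rpow_sub_one hx₀]
      field_simp
      ring
    rw [(hderiv x (Ioo_subset_Ioc_self hx)).deriv, factored]
    exact mul_nonneg (Real.rpow_nonneg hx.1.le _) (sub_nonneg.2 (h x hx))

lemma isBigO_rpow_of_tendsto_elasticity {a e : ℝ} (hp₀ : ∀ x, 0 < x → 0 < p x)
    (hp : DifferentiableOn ℝ p (Ioi 0)) (he : Tendsto (elasticity p) (𝓝[>] 0) (𝓝 e))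
    (hae : a < e) : p =O[𝓝[>] 0] fun x ↦ x ^ a := by
  have hpos : ∀ᶠ x in 𝓝[>] 0, 0 < p x := eventually_mem_nhdsWithin.mono hp₀
  obtain ⟨u, hu₀, hu⟩ := mem_nhdsGT_iff_exists_Ioc_subset.1
    (eventually_mul_le_mul_deriv_le_mul hpos he hae (lt_add_one e))
  have hmono : MonotoneOn (fun x ↦ p x * x ^ (-a)) (Ioc 0 u) :=
    monotoneOn_mul_rpow_neg (fun x hx ↦ hp.differentiableAt (Ioi_mem_nhds hx.1))
      fun x hx ↦ (hu (Ioo_subset_Ioc_self hx)).1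
  refine IsBigO.of_bound (p u * u ^ (-a)) ?_
  filter_upwards [Ioc_mem_nhdsGT hu₀] with x hx
  have hxa := Real.rpow_pos_of_pos hx.1 a
  rw [Real.norm_of_nonneg (hp₀ x hx.1).le, Real.norm_of_nonneg hxa.le, ← div_le_iff₀ hxa,
    div_eq_mul_inv, ← Real.rpow_neg hx.1.le]
  exact hmono hx ⟨hu₀, le_rfl⟩ hx.2

lemma continuousOn_sqrt_div (hp : ContinuousOn p (Ioi 0)) :
    ContinuousOn (fun x ↦ √(p x) / x) (Ioi 0) :=
  hp.sqrt.div continuousOn_id fun _ hx ↦ ne_of_gt hx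

lemma integrableAtFilter_sqrt_div {a : ℝ} (hp : ContinuousOn p (Ioi 0)) (ha : 0 < a)
    (hpa : p =O[𝓝[>] 0] fun x ↦ x ^ a) :
    IntegrableAtFilter (fun x ↦ √(p x) / x) (𝓝[>] 0) := by
  have hbound : (fun x ↦ √(p x) / x) =O[𝓝[>] 0] fun x ↦ x ^ (a / 2 - 1) := by
    refine (hpa.sqrt ?_).mul (isBigO_refl (fun x : ℝ ↦ x⁻¹) _) |>.congr' ?_ ?_
    · exact eventually_mem_nhdsWithin.mono fun x hx ↦ Real.rpow_nonneg (le_of_lt hx) a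
    · exact .of_forall fun x ↦ (div_eq_mul_inv _ _).symm
    · filter_upwards [self_mem_nhdsWithin] with x hx
      rw [Real.sqrt_eq_rpow, ← Real.rpow_mul (le_of_lt hx), mul_one_div, ← div_eq_mul_inv,
        Real.rpow_sub_one (ne_of_gt hx)]
  refine hbound.integrableAtFilter
    ((continuousOn_sqrt_div hp).stronglyMeasurableAtFilter_nhdsWithin measurableSet_Ioi 0)
    ⟨Ioo 0 1, Ioo_mem_nhdsGT one_pos, ?_⟩
  exact (intervalIntegral.integrableOn_Ioo_rpow_iff one_pos).2 (by linarith)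

lemma elasticity_deriv_of_eq_integral_sqrt_div {e : ℝ} (hp₀ : ∀ x, 0 < x → 0 < p x)
    (hp : DifferentiableOn ℝ p (Ioi 0)) (he₀ : 0 < e)
    (he : Tendsto (elasticity p) (𝓝[>] 0) (𝓝 e))
    (hk : ∀ x, 0 < x → k x = ∫ y in 0..x, √(p y) / y) {x : ℝ} (hx : 0 < x) :
    elasticity (deriv k) x = elasticity p x / 2 - 1 := by
  have hint : IntegrableAtFilter (fun y ↦ √(p y) / y) (𝓝[>] 0) :=
    integrableAtFilter_sqrt_div hp.continuousOn (half_pos he₀)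
      (isBigO_rpow_of_tendsto_elasticity hp₀ hp he (half_lt_self he₀))
  have hk' : deriv k =ᶠ[𝓝 x] fun y ↦ √(p y) / y :=
    (deriv_eqOn_of_eq_integral (continuousOn_sqrt_div hp.continuousOn) hint hk).eventuallyEq_of_mem
      (Ioi_mem_nhds hx)
  rw [elasticity_congr hk',
    elasticity_sqrt_div hx.ne' (hp₀ x hx) (hp.differentiableAt (Ioi_mem_nhds hx))]

end IntegralPotential

section PerturbedPowerLaw

variable {P Q : ℝ → ℝ} {κ γ : ℝ} {l : Filter ℝ}

/-- The factor `γ (1 + Q) + ρ Q'` by which the derivative of the perturbed power law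
`κ ρ ^ γ (1 + Q ρ)` differs from `κ ρ ^ (γ - 1)`. -/
noncomputable def derivFactor (γ : ℝ) (Q : ℝ → ℝ) (ρ : ℝ) : ℝ := γ * (1 + Q ρ) + ρ * deriv Q ρ

lemma deriv_perturbedPowerLaw {ρ : ℝ} (hρ : 0 < ρ) (hQ : DifferentiableAt ℝ Q ρ) :
    deriv (fun x ↦ κ * x ^ γ * (1 + Q x)) ρ = κ * (ρ ^ (γ - 1) * derivFactor γ Q ρ) := by
  have hpow : HasDerivAt (fun x : ℝ ↦ x ^ γ) (γ * ρ ^ (γ - 1)) ρ :=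
    Real.hasDerivAt_rpow_const (Or.inl hρ.ne')
  have hprod : deriv (fun x ↦ κ * x ^ γ * (1 + Q x)) ρ =
      κ * (γ * ρ ^ (γ - 1)) * (1 + Q ρ) + κ * ρ ^ γ * deriv Q ρ :=
    ((hpow.const_mul κ).mul (hQ.hasDerivAt.const_add 1)).deriv
  rw [hprod, derivFactor, Real.rpow_sub_one hρ.ne']
  field_simp

lemma hasDerivAt_derivFactor {ρ : ℝ} (hQ : ContDiffAt ℝ 2 Q ρ) :
    HasDerivAt (derivFactor γ Q) ((γ + 1) * deriv Q ρ + ρ * deriv (deriv Q) ρ) ρ := by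
  have hQ₁ : HasDerivAt Q (deriv Q ρ) ρ := (hQ.differentiableAt two_ne_zero).hasDerivAt
  have hQ₂ : HasDerivAt (deriv Q) (deriv (deriv Q) ρ) ρ :=
    ((hQ.derivWithin (m := 1) (by norm_num)).differentiableAt one_ne_zero).hasDerivAt
  refine (((hQ₁.const_add 1).const_mul γ).add ((hasDerivAt_id' ρ).mul hQ₂)).congr_deriv ?_
  ring

lemma tendsto_derivFactor (h₀ : Tendsto Q l (𝓝 0))
    (h₁ : Tendsto (fun ρ ↦ ρ * deriv Q ρ) l (𝓝 0)) : Tendsto (derivFactor γ Q) l (𝓝 γ) := by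
  have h := ((h₀.const_add 1).const_mul γ).add h₁
  rw [add_zero, add_zero, mul_one] at h
  exact h

lemma tendsto_elasticity_derivFactor (hγ : γ ≠ 0) (hQ : ∀ᶠ ρ in l, ContDiffAt ℝ 2 Q ρ)
    (h₀ : Tendsto Q l (𝓝 0)) (h₁ : Tendsto (fun ρ ↦ ρ * deriv Q ρ) l (𝓝 0))
    (h₂ : Tendsto (fun ρ ↦ ρ ^ 2 * deriv (deriv Q) ρ) l (𝓝 0)) :
    Tendsto (elasticity (derivFactor γ Q)) l (𝓝 0) := by
  have hnum : Tendsto (fun ρ ↦ (γ + 1) * (ρ * deriv Q ρ) + ρ ^ 2 * deriv (deriv Q) ρ) l (𝓝 0) := by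
    simpa using (h₁.const_mul (γ + 1)).add h₂
  have hquot := hnum.div (tendsto_derivFactor h₀ h₁) hγ
  rw [zero_div] at hquot
  refine hquot.congr' ?_
  filter_upwards [hQ] with ρ hQρ
  rw [elasticity, (hasDerivAt_derivFactor hQρ).deriv, Pi.div_apply]
  ring

lemma tendsto_elasticity_deriv (hκ : κ ≠ 0) (hγ : γ ≠ 0) (hl : ∀ᶠ ρ in l, 0 < ρ)
    (hQ : ∀ᶠ ρ in l, ContDiffAt ℝ 2 Q ρ)
    (hP : ∀ᶠ ρ in l, P =ᶠ[𝓝 ρ] fun x ↦ κ * x ^ γ * (1 + Q x))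
    (h₀ : Tendsto Q l (𝓝 0)) (h₁ : Tendsto (fun ρ ↦ ρ * deriv Q ρ) l (𝓝 0))
    (h₂ : Tendsto (fun ρ ↦ ρ ^ 2 * deriv (deriv Q) ρ) l (𝓝 0)) :
    Tendsto (elasticity (deriv P)) l (𝓝 (γ - 1)) := by
  have hlim := (tendsto_elasticity_derivFactor hγ hQ h₀ h₁ h₂).const_add (γ - 1)
  rw [add_zero] at hlim
  refine hlim.congr' ?_
  filter_upwards [hl, hQ, hP, (tendsto_derivFactor h₀ h₁).eventually_ne hγ] with ρ hρ hQρ hPρ hne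
  have hP' : deriv P =ᶠ[𝓝 ρ] fun x ↦ κ * (x ^ (γ - 1) * derivFactor γ Q x) := by
    filter_upwards [hPρ.deriv, Ioi_mem_nhds hρ, hQρ.eventually (by simp)] with x hPx hx hQx
    rw [hPx, deriv_perturbedPowerLaw hx (hQx.differentiableAt two_ne_zero)]
  rw [elasticity_congr hP', elasticity_const_mul hκ,
    elasticity_mul (f := fun x ↦ x ^ (γ - 1)) (Real.rpow_pos_of_pos hρ _).ne' hne
      (Real.differentiableAt_rpow_const_of_ne _ hρ.ne')
      (hasDerivAt_derivFactor hQρ).differentiableAt,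
    elasticity_rpow_const hρ]

lemma tendsto_pow_mul_iteratedDeriv {C e : ℝ} {j : ℕ} (hl : ∀ᶠ ρ in l, 0 < ρ)
    (hbd : ∀ᶠ ρ in l, |iteratedDeriv j Q ρ| ≤ C * ρ ^ (e - j))
    (he : Tendsto (fun ρ : ℝ ↦ ρ ^ e) l (𝓝 0)) :
    Tendsto (fun ρ ↦ ρ ^ j * iteratedDeriv j Q ρ) l (𝓝 0) := by
  refine squeeze_zero_norm' ?_ (by simpa using he.const_mul C)
  filter_upwards [hl, hbd] with ρ hρ hbdρ
  calc ‖ρ ^ j * iteratedDeriv j Q ρ‖ = ρ ^ j * |iteratedDeriv j Q ρ| := by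
        rw [norm_mul, Real.norm_of_nonneg (pow_pos hρ j).le, Real.norm_eq_abs]
    _ ≤ ρ ^ j * (C * ρ ^ (e - j)) := by gcongr
    _ = C * ρ ^ e := by rw [Real.rpow_sub_natCast hρ.ne']; field_simp

lemma tendsto_elasticity_deriv_of_iteratedDeriv_le {C e : ℝ} (hκ : κ ≠ 0) (hγ : γ ≠ 0)
    (hl : ∀ᶠ ρ in l, 0 < ρ) (hQ : ∀ᶠ ρ in l, ContDiffAt ℝ 2 Q ρ)
    (hP : ∀ᶠ ρ in l, P =ᶠ[𝓝 ρ] fun x ↦ κ * x ^ γ * (1 + Q x))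
    (hbd : ∀ᶠ ρ in l, ∀ j : ℕ, j ≤ 2 → |iteratedDeriv j Q ρ| ≤ C * ρ ^ (e - j))
    (he : Tendsto (fun ρ : ℝ ↦ ρ ^ e) l (𝓝 0)) :
    Tendsto (elasticity (deriv P)) l (𝓝 (γ - 1)) := by
  have hscaled (j : ℕ) (hj : j ≤ 2) : Tendsto (fun ρ ↦ ρ ^ j * iteratedDeriv j Q ρ) l (𝓝 0) :=
    tendsto_pow_mul_iteratedDeriv hl (hbd.mono fun ρ h ↦ h j hj) he
  refine tendsto_elasticity_deriv hκ hγ hl hQ hP ?_ ?_ ?_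
  · simpa using hscaled 0 zero_le_two
  · simpa using hscaled 1 one_le_two
  · simpa [iteratedDeriv_succ] using hscaled 2 le_rfl

lemma tendsto_elasticity_deriv_nhdsGT_zero {C e r : ℝ} (hκ : κ ≠ 0) (hγ : γ ≠ 0) (he : 0 < e)
    (hr : 0 < r) (hQ : ContDiffOn ℝ 2 Q (Ioo 0 r))
    (hP : ∀ ρ ∈ Ioo 0 r, P ρ = κ * ρ ^ γ * (1 + Q ρ))
    (hbd : ∀ ρ ∈ Ioo 0 r, ∀ j : ℕ, j ≤ 2 → |iteratedDeriv j Q ρ| ≤ C * ρ ^ (e - j)) :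
    Tendsto (elasticity (deriv P)) (𝓝[>] 0) (𝓝 (γ - 1)) := by
  have hmem : ∀ᶠ ρ in 𝓝[>] 0, ρ ∈ Ioo 0 r := Ioo_mem_nhdsGT hr
  have hpow : Tendsto (fun ρ : ℝ ↦ ρ ^ e) (𝓝[>] 0) (𝓝 0) := by
    simpa [Real.zero_rpow he.ne'] using
      (Real.continuousAt_rpow_const 0 e (.inr he.le)).tendsto.mono_left nhdsWithin_le_nhds
  exact tendsto_elasticity_deriv_of_iteratedDeriv_le hκ hγ self_mem_nhdsWithin
    (hmem.mono fun ρ hρ ↦ hQ.contDiffAt (isOpen_Ioo.mem_nhds hρ))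
    (hmem.mono fun ρ hρ ↦ eventually_of_mem (isOpen_Ioo.mem_nhds hρ) hP) (hmem.mono hbd) hpow

lemma tendsto_elasticity_deriv_atTop {C e r : ℝ} (hκ : κ ≠ 0) (hγ : γ ≠ 0) (he : 0 < e)
    (hQ : ContDiffOn ℝ 2 Q (Ioi r)) (hP : ∀ ρ ∈ Ioi r, P ρ = κ * ρ ^ γ * (1 + Q ρ))
    (hbd : ∀ ρ ∈ Ioi r, ∀ j : ℕ, j ≤ 2 → |iteratedDeriv j Q ρ| ≤ C * ρ ^ (-e - j)) :
    Tendsto (elasticity (deriv P)) atTop (𝓝 (γ - 1)) := by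
  have hmem : ∀ᶠ ρ in atTop, ρ ∈ Ioi r := Ioi_mem_atTop r
  exact tendsto_elasticity_deriv_of_iteratedDeriv_le hκ hγ (eventually_gt_atTop 0)
    (hmem.mono fun ρ hρ ↦ hQ.contDiffAt (Ioi_mem_nhds hρ))
    (hmem.mono fun ρ hρ ↦ eventually_of_mem (Ioi_mem_nhds hρ) hP) (hmem.mono hbd)
    (tendsto_rpow_neg_atTop he)

end PerturbedPowerLaw

section GenuineNonlinearity

variable {γ γ₁ γ₂ : ℝ} {l : Filter ℝ}

lemma eventually_deriv_bounds {p : ℝ → ℝ} (hp : ∀ᶠ ρ in l, 0 < p ρ)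
    (he : Tendsto (elasticity p) l (𝓝 (γ - 1))) (hγ : 1 < γ) (hγγ₁ : γ ≤ γ₁) (hγ₁ : γ₁ < 3) :
    ∀ᶠ ρ in l, (3 * γ₁ - 1) * (γ - 1) / (γ₁ + 5) * p ρ ≤ ρ * deriv p ρ ∧
      ρ * deriv p ρ ≤ (5 + γ₁) * (γ - 1) / (3 * γ₁ - 1) * p ρ ∧
      (5 + γ₁) * (γ - 1) / (3 * γ₁ - 1) * p ρ < 2 * p ρ := by
  have hlower : (3 * γ₁ - 1) * (γ - 1) / (γ₁ + 5) < γ - 1 := by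
    rw [div_lt_iff₀ (by linarith)]
    nlinarith
  have hupper : γ - 1 < (5 + γ₁) * (γ - 1) / (3 * γ₁ - 1) := by
    rw [lt_div_iff₀ (by linarith)]
    nlinarith
  have htwo : (5 + γ₁) * (γ - 1) / (3 * γ₁ - 1) < 2 := by
    rw [div_lt_iff₀ (by linarith)]
    nlinarith
  filter_upwards [hp, eventually_mul_le_mul_deriv_le_mul hp he hlower hupper] with ρ hpρ h
  exact ⟨h.1, h.2, mul_lt_mul_of_pos_right htwo hpρ⟩

lemma eventually_abs_half_sub_one_bounds {E : ℝ → ℝ} (hE : Tendsto E l (𝓝 (γ - 1)))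
    (hγ₂ : 1 < γ₂) (hγ₂γ : γ₂ ≤ γ) (hγ : γ < 3) :
    ∀ᶠ ρ in l, 0 < |E ρ / 2 - 1| ∧ |E ρ / 2 - 1| ≤ (5 - γ₂) / 4 := by
  have hlim : Tendsto (fun ρ ↦ |E ρ / 2 - 1|) l (𝓝 ((3 - γ) / 2)) := by
    convert ((hE.div_const 2).sub_const 1).abs using 2
    rw [abs_of_neg (by linarith)]
    ring
  filter_upwards [hlim.eventually_const_lt (by linarith : 0 < (3 - γ) / 2),
    hlim.eventually_lt_const (by linarith : (3 - γ) / 2 < (5 - γ₂) / 4)] with ρ hpos hlt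
  exact ⟨hpos, hlt.le⟩

theorem genuine_nonlinearity_bounds_general {P k : ℝ → ℝ} {ρstar : ℝ} (ρss : ℝ)
    (hP : DifferentiableOn ℝ (deriv P) (Ioi 0)) (hP₀ : ∀ ρ, 0 < ρ → 0 < deriv P ρ)
    (hρstar : 0 < ρstar) (hγ₁ : γ₁ < 3) (hγ₂ : 1 < γ₂) (hγ₂₁ : γ₂ ≤ γ₁)
    (hzero : Tendsto (elasticity (deriv P)) (𝓝[>] 0) (𝓝 (γ₁ - 1)))
    (htop : Tendsto (elasticity (deriv P)) atTop (𝓝 (γ₂ - 1)))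
    (hk : ∀ ρ, 0 < ρ → k ρ = ∫ y in 0..ρ, √(deriv P y) / y) :
    (∀ ρ : ℝ, 0 < ρ →
      ρ * deriv (deriv k) ρ / deriv k ρ = ρ * deriv (deriv P) ρ / (2 * deriv P ρ) - 1) ∧
    (∃ ν ∈ Ioo (0 : ℝ) 1, ∃ ρb₁ ∈ Ioc (0 : ℝ) ρstar, ∃ ρb₂ : ℝ, ρss ≤ ρb₂ ∧
      (∀ ρ ∈ Ioc (0 : ℝ) ρb₁,
        (3 * γ₁ - 1) * (γ₁ - 1) / (γ₁ + 5) * deriv P ρ ≤ ρ * deriv (deriv P) ρ ∧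
        ρ * deriv (deriv P) ρ ≤ (5 + γ₁) * (γ₁ - 1) / (3 * γ₁ - 1) * deriv P ρ ∧
        (5 + γ₁) * (γ₁ - 1) / (3 * γ₁ - 1) * deriv P ρ < 2 * deriv P ρ) ∧
      (∀ ρ : ℝ, ρb₂ ≤ ρ →
        (3 * γ₁ - 1) * (γ₂ - 1) / (γ₁ + 5) * deriv P ρ ≤ ρ * deriv (deriv P) ρ ∧
        ρ * deriv (deriv P) ρ ≤ (5 + γ₁) * (γ₂ - 1) / (3 * γ₁ - 1) * deriv P ρ ∧
        (5 + γ₁) * (γ₂ - 1) / (3 * γ₁ - 1) * deriv P ρ < 2 * deriv P ρ) ∧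
      (∀ ρ : ℝ, (ρ ∈ Ioc (0 : ℝ) ρb₁ ∨ ρb₂ ≤ ρ) →
        0 < |ρ * deriv (deriv k) ρ / deriv k ρ| ∧
        |ρ * deriv (deriv k) ρ / deriv k ρ| ≤ ν)) := by
  have hγ₁' : 1 < γ₁ := hγ₂.trans_le hγ₂₁
  have hid (ρ : ℝ) (hρ : 0 < ρ) : elasticity (deriv k) ρ = elasticity (deriv P) ρ / 2 - 1 :=
    elasticity_deriv_of_eq_integral_sqrt_div hP₀ hP (sub_pos.2 hγ₁') hzero hk hρ
  obtain ⟨ρb₁, hρb₁, near⟩ := mem_nhdsGT_iff_exists_Ioc_subset.1 <|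
    ((eventually_deriv_bounds (eventually_mem_nhdsWithin.mono hP₀) hzero hγ₁' le_rfl hγ₁).and
      (eventually_abs_half_sub_one_bounds hzero hγ₂ hγ₂₁ hγ₁)).and (Ioc_mem_nhdsGT hρstar)
  obtain ⟨ρb₂, far⟩ := eventually_atTop.1 <|
    ((eventually_deriv_bounds ((eventually_gt_atTop 0).mono hP₀) htop hγ₂ hγ₂₁ hγ₁).and
      (eventually_abs_half_sub_one_bounds htop hγ₂ le_rfl (hγ₂₁.trans_lt hγ₁))).and
    ((eventually_gt_atTop 0).and (eventually_ge_atTop ρss))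
  refine ⟨fun ρ hρ ↦ ?_, (5 - γ₂) / 4, ⟨by linarith, by linarith⟩, ρb₁, (near ⟨hρb₁, le_rfl⟩).2,
    ρb₂, (far ρb₂ le_rfl).2.2, fun ρ hρ ↦ (near hρ).1.1, fun ρ hρ ↦ (far ρ hρ).1.1, ?_⟩
  · rw [mul_comm 2, ← div_div]
    exact hid ρ hρ
  · rintro ρ (hρ | hρ) <;> rw [← elasticity, hid ρ]
    exacts [(near hρ).1.2, hρ.1, (far ρ hρ).1.2, (far ρ hρ).2.1]

end GenuineNonlinearity

theorem genuine_nonlinearity_bounds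
    (P Q₁ Q₂ : ℝ → ℝ) (ρstar ρss γ₁ γ₂ κ₁ κ₂ Cs Css εe : ℝ)
    (hPC1 : ContDiffOn ℝ 1 P (Ici 0))
    (hPC4 : ContDiffOn ℝ 4 P (Ioi 0))
    (hH1 : ∀ ρ : ℝ, 0 < ρ → 0 < deriv P ρ ∧ 0 < 2 * deriv P ρ + ρ * deriv (deriv P) ρ)
    (hρstar : 0 < ρstar) (hγ₁ : 1 < γ₁) (hγ₁3 : γ₁ < 3) (hκ₁ : 0 < κ₁) (hCs : 0 < Cs)
    (hQ₁C4 : ContDiffOn ℝ 4 Q₁ (Ioi 0))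
    (hPsmall : ∀ ρ ∈ Ico (0:ℝ) ρstar, P ρ = κ₁ * ρ ^ γ₁ * (1 + Q₁ ρ))
    (hQ₁bd : ∀ ρ ∈ Ioo (0:ℝ) ρstar, ∀ j : ℕ, j ≤ 4 →
      |iteratedDeriv j Q₁ ρ| ≤ Cs * ρ ^ (γ₁ - 1 - (j : ℝ)))
    (hρss : ρstar < ρss) (hγ₂ : 6/5 < γ₂) (hγ₂1 : γ₂ ≤ γ₁) (hκ₂ : 0 < κ₂)
    (hεe : 0 < εe) (hCss : 0 < Css)
    (hQ₂C4 : ContDiffOn ℝ 4 Q₂ (Ioi 0))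
    (hPlarge : ∀ ρ : ℝ, ρss ≤ ρ → P ρ = κ₂ * ρ ^ γ₂ * (1 + Q₂ ρ))
    (hQ₂bd : ∀ ρ : ℝ, ρss ≤ ρ → ∀ j : ℕ, j ≤ 4 →
      |iteratedDeriv j Q₂ ρ| ≤ Css * ρ ^ (-εe - (j : ℝ))) :
    ∀ k : ℝ → ℝ, (∀ ρ : ℝ, k ρ = ∫ y in (0:ℝ)..ρ, Real.sqrt (deriv P y) / y) →
      (∀ ρ : ℝ, 0 < ρ →
        ρ * deriv (deriv k) ρ / deriv k ρ = ρ * deriv (deriv P) ρ / (2 * deriv P ρ) - 1) ∧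
      (∃ ν ∈ Ioo (0:ℝ) 1, ∃ ρb₁ ∈ Ioc (0:ℝ) ρstar, ∃ ρb₂ : ℝ, ρss ≤ ρb₂ ∧
        (∀ ρ ∈ Ioc (0:ℝ) ρb₁,
          (3 * γ₁ - 1) * (γ₁ - 1) / (γ₁ + 5) * deriv P ρ ≤ ρ * deriv (deriv P) ρ ∧
          ρ * deriv (deriv P) ρ ≤ (5 + γ₁) * (γ₁ - 1) / (3 * γ₁ - 1) * deriv P ρ ∧
          (5 + γ₁) * (γ₁ - 1) / (3 * γ₁ - 1) * deriv P ρ < 2 * deriv P ρ) ∧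
        (∀ ρ : ℝ, ρb₂ ≤ ρ →
          (3 * γ₁ - 1) * (γ₂ - 1) / (γ₁ + 5) * deriv P ρ ≤ ρ * deriv (deriv P) ρ ∧
          ρ * deriv (deriv P) ρ ≤ (5 + γ₁) * (γ₂ - 1) / (3 * γ₁ - 1) * deriv P ρ ∧
          (5 + γ₁) * (γ₂ - 1) / (3 * γ₁ - 1) * deriv P ρ < 2 * deriv P ρ) ∧
        (∀ ρ : ℝ, (ρ ∈ Ioc (0:ℝ) ρb₁ ∨ ρb₂ ≤ ρ) →
          0 < |ρ * deriv (deriv k) ρ / deriv k ρ| ∧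
          |ρ * deriv (deriv k) ρ / deriv k ρ| ≤ ν)) := by
  intro k hk
  exact genuine_nonlinearity_bounds_general ρss
    ((hPC4.deriv_of_isOpen isOpen_Ioi (m := 3) (by norm_num)).differentiableOn (by norm_num))
    (fun ρ hρ ↦ (hH1 ρ hρ).1) hρstar hγ₁3 (by linarith) hγ₂1
    (tendsto_elasticity_deriv_nhdsGT_zero hκ₁.ne' (by linarith) (sub_pos.2 hγ₁) hρstar
      ((hQ₁C4.of_le (by norm_num)).mono Ioo_subset_Ioi_self)
      (fun ρ hρ ↦ hPsmall ρ (Ioo_subset_Ico_self hρ)) fun ρ hρ j hj ↦ hQ₁bd ρ hρ j (by lia))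
    (tendsto_elasticity_deriv_atTop hκ₂.ne' (by linarith) hεe
      ((hQ₂C4.of_le (by norm_num)).mono (Ioi_subset_Ioi (hρstar.trans hρss).le))
      (fun ρ hρ ↦ hPlarge ρ (le_of_lt hρ)) fun ρ hρ j hj ↦ hQ₂bd ρ (le_of_lt hρ) j (by lia))
    fun ρ _ ↦ hk ρ
end

section
/- Let 0 < θ₂ < 1, θ ≥ 0, ε > 0, ρ^* > 1, and let C, C₀, D be positive constants. Let d : (0,∞) → ℝ be a measurable function with 0 < d(s) ≤ D for all s > 0 and |d(r) − (1+θ₂)| ≤ C₀ r^{−ε} for all r ≥ ρ^*. Let x : (0,∞) → [0,∞) be measurable and locally integrable, and suppose x(t) ≤ C t^{θ} + t^{−1} ∫₀^t d(s) x(s) ds for all t ≥ ρ^*. Then there exists a constant C̃ > 0, independent of t, such that for all t ≥ ρ^*: x(t) ≤ C̃ t^{θ₂} if 0 ≤ θ < θ₂; x(t) ≤ C̃ t^{θ₂} ln t if θ = θ₂; and x(t) ≤ C̃ t^{θ} if θ > θ₂. -/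
open Set MeasureTheory Filter

/-!
Put `y t = K + ∫ s in ρ..t, d s * x s`. Inserting the hypothesis on `x` into the integral shows that
the positive part of `y` satisfies a linear integral inequality with coefficient `β s / s`, where
`β s = 1 + θ₂ + C₀ * s ^ (-ε)` dominates `d`. The integrating factor
`t ^ (-(1 + θ₂)) * exp (C₀ / ε * t ^ (-ε))` is comparable to `t ^ (-(1 + θ₂))`, because
`s ^ (-ε)` is integrable against `ds / s` at infinity. Hence `t ^ (-(1 + θ₂)) * y t` is at most a
constant times `1 + ∫ s in ρ..t, s ^ (θ - θ₂ - 1)`, and the three regimes are those of this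
integral.
-/

open Asymptotics

theorem intervalIntegrable_mul_of_norm_le {a b D : ℝ} {d x : ℝ → ℝ} (hab : a ≤ b)
    (hd : AEStronglyMeasurable d (volume.restrict (Ioc a b)))
    (hdD : ∀ s ∈ Ioc a b, ‖d s‖ ≤ D) (hx : IntervalIntegrable x volume a b) :
    IntervalIntegrable (fun s => d s * x s) volume a b := by
  rw [intervalIntegrable_iff_integrableOn_Ioc_of_le hab] at hx ⊢
  exact hx.bdd_mul hd ((ae_restrict_iff' measurableSet_Ioc).2 (Eventually.of_forall hdD))

theorem isBigO_principal_of_nonneg_of_le {ι : Type*} {s : Set ι} {f g : ι → ℝ} (c : ℝ)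
    (hf : ∀ t ∈ s, 0 ≤ f t) (hfg : ∀ t ∈ s, f t ≤ c * g t) : f =O[𝓟 s] g :=
  isBigO_principal.2 ⟨|c|, fun t ht => by
    rw [Real.norm_of_nonneg (hf t ht), Real.norm_eq_abs, ← abs_mul]
    exact (hfg t ht).trans (le_abs_self _)⟩

section Gronwall

variable {a b c : ℝ} {d p q w x y N β : ℝ → ℝ}

theorem hasDerivWithinAt_integral_Icc (hp : ContinuousOn p (Icc a b)) {t : ℝ} (ht : t ∈ Icc a b) :
    HasDerivWithinAt (fun u => ∫ s in a..u, p s) (p t) (Icc a b) t := by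
  have : Fact (t ∈ Icc a b) := ⟨ht⟩
  refine intervalIntegral.integral_hasDerivWithinAt_right (t := Icc a b) ?_
    (hp.stronglyMeasurableAtFilter_nhdsWithin measurableSet_Icc t) (hp t ht)
  exact (hp.mono (Icc_subset_Icc_right ht.2)).intervalIntegrable_of_Icc ht.1

theorem mul_le_add_integral_mul_of_le_add_integral (hab : a ≤ b)
    (hy : ContinuousOn y (Icc a b)) (hp : ContinuousOn p (Icc a b)) (hq : ContinuousOn q (Icc a b))
    (hq_nonneg : ∀ t ∈ Icc a b, 0 ≤ q t) (hN_nonneg : ∀ t ∈ Icc a b, 0 ≤ N t)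
    (hN : ∀ t ∈ Icc a b, HasDerivWithinAt N (-(q t * N t)) (Icc a b) t)
    (hle : ∀ t ∈ Icc a b, y t ≤ c + ∫ s in a..t, (p s + q s * y s)) :
    y b * N b ≤ c * N a + ∫ s in a..b, p s * N s := by
  set z : ℝ → ℝ := fun t => c + ∫ s in a..t, (p s + q s * y s) with hz
  have hN_cont : ContinuousOn N (Icc a b) := fun t ht => (hN t ht).continuousWithinAt
  have hderiv : ∀ t ∈ Icc a b, HasDerivWithinAt (fun t => z t * N t - ∫ s in a..t, p s * N s)
      ((p t + q t * y t) * N t + z t * -(q t * N t) - p t * N t) (Icc a b) t := fun t ht =>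
    (((hasDerivWithinAt_integral_Icc (hp.add (hq.mul hy)) ht).const_add c).mul (hN t ht)).sub
      (hasDerivWithinAt_integral_Icc (hp.mul hN_cont) ht)
  have hanti : AntitoneOn (fun t => z t * N t - ∫ s in a..t, p s * N s) (Icc a b) := by
    refine antitoneOn_of_hasDerivWithinAt_nonpos (convex_Icc a b)
      (fun t ht => (hderiv t ht).continuousWithinAt)
      (fun t ht => (hderiv t (interior_subset ht)).mono interior_subset) fun t ht => ?_
    have ht := interior_subset ht
    have hgap : 0 ≤ q t * N t * (z t - y t) :=
      mul_nonneg (mul_nonneg (hq_nonneg t ht) (hN_nonneg t ht)) (sub_nonneg.2 (hle t ht))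
    linarith
  have hend := hanti (left_mem_Icc.2 hab) (right_mem_Icc.2 hab) hab
  simp only [hz, intervalIntegral.integral_same, add_zero, sub_zero] at hend
  have hyz := mul_le_mul_of_nonneg_right (hle b (right_mem_Icc.2 hab))
    (hN_nonneg b (right_mem_Icc.2 hab))
  linarith

theorem continuousOn_posPart_add_integral (hab : a ≤ b)
    (hp : IntervalIntegrable p volume a b) :
    ContinuousOn (fun t => (c + ∫ s in a..t, p s)⁺) (Icc a b) := by
  rw [intervalIntegrable_iff_integrableOn_Icc_of_le hab, ← uIcc_of_le hab] at hp
  rw [← uIcc_of_le hab]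
  exact continuous_posPart.comp_continuousOn
    (continuousOn_const.add (intervalIntegral.continuousOn_primitive_interval hp))

-- Passing to the positive part makes the bound on `x` nonnegative, so that `d ≤ β` can be used.
theorem posPart_add_integral_le (hab : a ≤ b)
    (hdx : IntervalIntegrable (fun s => d s * x s) volume a b)
    (hβ : ContinuousOn β (Icc a b)) (hp : ContinuousOn p (Icc a b)) (hw : ContinuousOn w (Icc a b))
    (hd_nonneg : ∀ s ∈ Icc a b, 0 ≤ d s) (hd_le : ∀ s ∈ Icc a b, d s ≤ β s)
    (hp_nonneg : ∀ s ∈ Icc a b, 0 ≤ p s) (hw_nonneg : ∀ s ∈ Icc a b, 0 ≤ w s)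
    (hx : ∀ s ∈ Icc a b, x s ≤ p s + w s * (c + ∫ r in a..s, d r * x r)) :
    (c + ∫ s in a..b, d s * x s)⁺ ≤
      c⁺ + ∫ s in a..b, (β s * p s + β s * w s * (c + ∫ r in a..s, d r * x r)⁺) := by
  have hbound : ∀ s ∈ Icc a b,
      d s * x s ≤ β s * p s + β s * w s * (c + ∫ r in a..s, d r * x r)⁺ := by
    intro s hs
    set y := c + ∫ r in a..s, d r * x r
    have hrhs : 0 ≤ p s + w s * y⁺ :=
      add_nonneg (hp_nonneg s hs) (mul_nonneg (hw_nonneg s hs) (posPart_nonneg y))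
    calc d s * x s ≤ d s * (p s + w s * y⁺) := by
          refine mul_le_mul_of_nonneg_left ((hx s hs).trans ?_) (hd_nonneg s hs)
          gcongr
          exacts [hw_nonneg s hs, le_posPart y]
      _ ≤ β s * (p s + w s * y⁺) := mul_le_mul_of_nonneg_right (hd_le s hs) hrhs
      _ = β s * p s + β s * w s * y⁺ := by ring
  have hbound_nonneg : ∀ s ∈ Icc a b,
      0 ≤ β s * p s + β s * w s * (c + ∫ r in a..s, d r * x r)⁺ := fun s hs => by
    have hβ_nonneg : 0 ≤ β s := (hd_nonneg s hs).trans (hd_le s hs)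
    have hβw_nonneg : 0 ≤ β s * w s := mul_nonneg hβ_nonneg (hw_nonneg s hs)
    exact add_nonneg (mul_nonneg hβ_nonneg (hp_nonneg s hs))
      (mul_nonneg hβw_nonneg (posPart_nonneg _))
  have hint := ((hβ.mul hp).add ((hβ.mul hw).mul
    (continuousOn_posPart_add_integral (c := c) hab hdx))).intervalIntegrable_of_Icc
      (μ := volume) hab
  refine sup_le (add_le_add (le_posPart c)
    (intervalIntegral.integral_mono_on hab hdx hint hbound)) ?_
  exact add_nonneg (posPart_nonneg c) (intervalIntegral.integral_nonneg hab hbound_nonneg)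

theorem posPart_add_integral_mul_le (hab : a ≤ b)
    (hdx : IntervalIntegrable (fun s => d s * x s) volume a b)
    (hβ : ContinuousOn β (Icc a b)) (hp : ContinuousOn p (Icc a b)) (hw : ContinuousOn w (Icc a b))
    (hd_nonneg : ∀ s ∈ Icc a b, 0 ≤ d s) (hd_le : ∀ s ∈ Icc a b, d s ≤ β s)
    (hp_nonneg : ∀ s ∈ Icc a b, 0 ≤ p s) (hw_nonneg : ∀ s ∈ Icc a b, 0 ≤ w s)
    (hx : ∀ s ∈ Icc a b, x s ≤ p s + w s * (c + ∫ r in a..s, d r * x r))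
    (hN_nonneg : ∀ s ∈ Icc a b, 0 ≤ N s)
    (hN : ∀ s ∈ Icc a b, HasDerivWithinAt N (-(β s * w s * N s)) (Icc a b) s) :
    (c + ∫ s in a..b, d s * x s)⁺ * N b ≤ c⁺ * N a + ∫ s in a..b, β s * p s * N s := by
  refine mul_le_add_integral_mul_of_le_add_integral
    (y := fun t => (c + ∫ s in a..t, d s * x s)⁺) hab
    (continuousOn_posPart_add_integral hab hdx) (hβ.mul hp) (hβ.mul hw)
    (fun s hs => mul_nonneg ((hd_nonneg s hs).trans (hd_le s hs)) (hw_nonneg s hs))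
    hN_nonneg hN fun t ht => ?_
  have hsub : Icc a t ⊆ Icc a b := Icc_subset_Icc_right ht.2
  have hdx_t : IntervalIntegrable (fun s => d s * x s) volume a t :=
    hdx.mono_set (by rw [uIcc_of_le ht.1, uIcc_of_le hab]; exact hsub)
  exact posPart_add_integral_le ht.1 hdx_t (hβ.mono hsub) (hp.mono hsub) (hw.mono hsub)
    (fun s hs => hd_nonneg s (hsub hs)) (fun s hs => hd_le s (hsub hs))
    (fun s hs => hp_nonneg s (hsub hs)) (fun s hs => hw_nonneg s (hsub hs))
    fun s hs => hx s (hsub hs)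

end Gronwall

section IntegratingFactor

variable {θ₂ C₀ ε ρ t : ℝ}

/-- The solution `N` of `N' = -((1 + θ₂ + C₀ * t ^ (-ε)) / t) * N` on `(0, ∞)` asymptotic to
`t ^ (-(1 + θ₂))` at infinity; multiplying by it solves the comparison equation. -/
noncomputable def integratingFactor (θ₂ C₀ ε t : ℝ) : ℝ :=
  t ^ (-(1 + θ₂)) * Real.exp (C₀ / ε * t ^ (-ε))

theorem hasDerivAt_integratingFactor (hε : ε ≠ 0) (ht : 0 < t) :
    HasDerivAt (integratingFactor θ₂ C₀ ε)
      (-((1 + θ₂ + C₀ * t ^ (-ε)) * t⁻¹ * integratingFactor θ₂ C₀ ε t)) t := by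
  have hpow := Real.hasDerivAt_rpow_const (x := t) (p := -(1 + θ₂)) (Or.inl ht.ne')
  have hexp := ((Real.hasDerivAt_rpow_const (x := t) (p := -ε)
    (Or.inl ht.ne')).const_mul (C₀ / ε)).exp
  refine (hpow.mul hexp).congr_deriv ?_
  rw [Real.rpow_sub_one ht.ne', Real.rpow_sub_one ht.ne', integratingFactor]
  field_simp
  ring

theorem rpow_le_integratingFactor (hC₀ : 0 ≤ C₀) (hε : 0 < ε) (ht : 0 ≤ t) :
    t ^ (-(1 + θ₂)) ≤ integratingFactor θ₂ C₀ ε t :=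
  le_mul_of_one_le_right (by positivity) (Real.one_le_exp (by positivity))

theorem integratingFactor_le (hC₀ : 0 ≤ C₀) (hε : 0 < ε) (hρ : 0 < ρ) (ht : ρ ≤ t) :
    integratingFactor θ₂ C₀ ε t ≤ Real.exp (C₀ / ε * ρ ^ (-ε)) * t ^ (-(1 + θ₂)) := by
  have ht_pos : 0 < t := hρ.trans_le ht
  have hpow : t ^ (-ε) ≤ ρ ^ (-ε) := Real.rpow_le_rpow_of_nonpos hρ ht (by linarith)
  rw [integratingFactor, mul_comm]
  gcongr

theorem integratingFactor_nonneg (ht : 0 ≤ t) : 0 ≤ integratingFactor θ₂ C₀ ε t := by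
  unfold integratingFactor
  positivity

theorem coefficient_mul_forcing_mul_integratingFactor_le {C θ : ℝ} (hC : 0 ≤ C) (hC₀ : 0 ≤ C₀)
    (hε : 0 < ε) (hρ : 0 < ρ) (ht : ρ ≤ t) (hβ : 0 ≤ 1 + θ₂ + C₀ * t ^ (-ε)) :
    (1 + θ₂ + C₀ * t ^ (-ε)) * (C * t ^ θ) * integratingFactor θ₂ C₀ ε t ≤
      (1 + θ₂ + C₀ * ρ ^ (-ε)) * C * Real.exp (C₀ / ε * ρ ^ (-ε)) * t ^ (θ - θ₂ - 1) := by
  have ht_pos : 0 < t := hρ.trans_le ht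
  have hpow : t ^ (-ε) ≤ ρ ^ (-ε) := Real.rpow_le_rpow_of_nonpos hρ ht (by linarith)
  calc (1 + θ₂ + C₀ * t ^ (-ε)) * (C * t ^ θ) * integratingFactor θ₂ C₀ ε t
      ≤ (1 + θ₂ + C₀ * t ^ (-ε)) * (C * t ^ θ) *
          (Real.exp (C₀ / ε * ρ ^ (-ε)) * t ^ (-(1 + θ₂))) := by
        gcongr
        exact integratingFactor_le hC₀ hε hρ ht
    _ ≤ (1 + θ₂ + C₀ * ρ ^ (-ε)) * (C * t ^ θ) *
          (Real.exp (C₀ / ε * ρ ^ (-ε)) * t ^ (-(1 + θ₂))) := by gcongr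
    _ = (1 + θ₂ + C₀ * ρ ^ (-ε)) * C * Real.exp (C₀ / ε * ρ ^ (-ε)) * t ^ (θ - θ₂ - 1) := by
        rw [show θ - θ₂ - 1 = θ + -(1 + θ₂) by ring, Real.rpow_add ht_pos]
        ring

end IntegratingFactor

section RateProfile

variable {α ρ t : ℝ}

/-- The growth of `x` relative to the homogeneous rate `t ^ θ₂`, where `α = θ - θ₂`: the terms come
from the data at `ρ`, from the forcing `t ^ θ`, and from the forcing accumulated over `[ρ, t]`. -/
noncomputable def rateProfile (α ρ t : ℝ) : ℝ :=
  1 + t ^ α + ∫ s in ρ..t, s ^ (α - 1)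

theorem integral_rpow_nonneg (hρ : 0 ≤ ρ) (ht : ρ ≤ t) : 0 ≤ ∫ s in ρ..t, s ^ α :=
  intervalIntegral.integral_nonneg ht fun _ hs => Real.rpow_nonneg (hρ.trans hs.1) α

theorem integral_rpow_sub_one (hα : α ≠ 0) (hρ : 0 < ρ) (ht : 0 < t) :
    ∫ s in ρ..t, s ^ (α - 1) = α⁻¹ * (t ^ α - ρ ^ α) := by
  rw [integral_rpow (Or.inr ⟨by simpa [sub_eq_iff_eq_add] using hα, notMem_uIcc_of_lt hρ ht⟩),
    sub_add_cancel, div_eq_inv_mul]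

theorem integral_rpow_sub_one_isBigO (hα : α ≠ 0) (hρ : 0 < ρ) :
    (fun t => ∫ s in ρ..t, s ^ (α - 1)) =O[𝓟 (Ici ρ)] fun t => t ^ α - ρ ^ α :=
  isBigO_principal.2 ⟨‖α⁻¹‖, fun t ht => by
    rw [integral_rpow_sub_one hα hρ (hρ.trans_le ht), norm_mul]⟩

theorem rateProfile_isBigO_one (hα : α < 0) (hρ : 0 < ρ) :
    rateProfile α ρ =O[𝓟 (Ici ρ)] fun _ => (1 : ℝ) := by
  have hpow : (fun t : ℝ => t ^ α) =O[𝓟 (Ici ρ)] fun _ => (1 : ℝ) :=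
    isBigO_principal_of_nonneg_of_le (ρ ^ α) (fun t ht => Real.rpow_nonneg (hρ.le.trans ht) α)
      fun t ht => by simpa using Real.rpow_le_rpow_of_nonpos hρ ht hα.le
  have hint := (integral_rpow_sub_one_isBigO hα.ne hρ).trans
    (hpow.sub (isBigO_const_const _ one_ne_zero _))
  exact ((isBigO_refl _ _).add hpow).add hint

theorem rateProfile_isBigO_rpow (hα : 0 < α) (hρ : 0 < ρ) :
    rateProfile α ρ =O[𝓟 (Ici ρ)] fun t => t ^ α := by
  have hconst (k : ℝ) : (fun _ : ℝ => k) =O[𝓟 (Ici ρ)] fun t => t ^ α :=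
    (isBigO_const_const k (Real.rpow_pos_of_pos hρ α).ne' _).trans <|
      isBigO_principal_of_nonneg_of_le 1 (fun _ _ => Real.rpow_nonneg hρ.le α)
        fun t ht => by simpa using Real.rpow_le_rpow hρ.le ht hα.le
  have hint := (integral_rpow_sub_one_isBigO hα.ne' hρ).trans
    ((isBigO_refl _ _).sub (hconst (ρ ^ α)))
  exact ((hconst 1).add (isBigO_refl _ _)).add hint

theorem rateProfile_zero_isBigO_log (hρ : 1 < ρ) :
    rateProfile 0 ρ =O[𝓟 (Ici ρ)] Real.log := by
  have hρ_pos : 0 < ρ := zero_lt_one.trans hρ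
  have hconst (k : ℝ) : (fun _ : ℝ => k) =O[𝓟 (Ici ρ)] Real.log :=
    (isBigO_const_const k (Real.log_pos hρ).ne' _).trans <|
      isBigO_principal_of_nonneg_of_le 1 (fun _ _ => Real.log_nonneg hρ.le)
        fun t ht => by simpa using Real.log_le_log hρ_pos ht
  have hsum := (hconst 2).add ((isBigO_refl Real.log (𝓟 (Ici ρ))).sub (hconst (Real.log ρ)))
  refine hsum.congr' ?_ EventuallyEq.rfl
  filter_upwards [mem_principal_self _] with t ht
  have ht_pos : 0 < t := hρ_pos.trans_le ht
  simp only [rateProfile, Real.rpow_zero, zero_sub, Real.rpow_neg_one,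
    integral_inv_of_pos hρ_pos ht_pos, Real.log_div ht_pos.ne' hρ_pos.ne']
  norm_num

end RateProfile

section MainEstimate

variable {θ₂ θ ε ρ C C₀ K : ℝ} {d x : ℝ → ℝ}

theorem exists_posPart_add_integral_mul_rpow_le (hε : 0 < ε) (hρ : 0 < ρ) (hC : 0 ≤ C)
    (hC₀ : 0 ≤ C₀) (hd_nonneg : ∀ s, ρ ≤ s → 0 ≤ d s)
    (hd_le : ∀ s, ρ ≤ s → d s ≤ 1 + θ₂ + C₀ * s ^ (-ε))
    (hdx : ∀ t, ρ ≤ t → IntervalIntegrable (fun s => d s * x s) volume ρ t)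
    (hx : ∀ t, ρ ≤ t → x t ≤ C * t ^ θ + t⁻¹ * (K + ∫ s in ρ..t, d s * x s)) :
    ∃ A B : ℝ, 0 ≤ A ∧ 0 ≤ B ∧ ∀ t, ρ ≤ t →
      (K + ∫ s in ρ..t, d s * x s)⁺ * t ^ (-(1 + θ₂)) ≤
        A + B * ∫ s in ρ..t, s ^ (θ - θ₂ - 1) := by
  set N := integratingFactor θ₂ C₀ ε
  set β : ℝ → ℝ := fun s => 1 + θ₂ + C₀ * s ^ (-ε)
  have hβ_nonneg (s : ℝ) (hs : ρ ≤ s) : 0 ≤ β s := (hd_nonneg s hs).trans (hd_le s hs)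
  have hβρ := hβ_nonneg ρ le_rfl
  refine ⟨K⁺ * N ρ, β ρ * C * Real.exp (C₀ / ε * ρ ^ (-ε)),
    mul_nonneg (posPart_nonneg K) (integratingFactor_nonneg hρ.le), by positivity, fun t ht => ?_⟩
  have hpos {s : ℝ} (hs : s ∈ Icc ρ t) : 0 < s := hρ.trans_le hs.1
  have hrpow (r : ℝ) : ContinuousOn (fun s : ℝ => s ^ r) (Icc ρ t) :=
    continuousOn_id.rpow_const fun s hs => Or.inl (hpos hs).ne'
  have hβ : ContinuousOn β (Icc ρ t) := continuousOn_const.add (continuousOn_const.mul (hrpow _))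
  have hp : ContinuousOn (fun s => C * s ^ θ) (Icc ρ t) := continuousOn_const.mul (hrpow θ)
  have hN (s : ℝ) (hs : s ∈ Icc ρ t) : HasDerivWithinAt N (-(β s * s⁻¹ * N s)) (Icc ρ t) s :=
    (hasDerivAt_integratingFactor hε.ne' (hpos hs)).hasDerivWithinAt
  have hN_cont : ContinuousOn N (Icc ρ t) := fun s hs => (hN s hs).continuousWithinAt
  calc (K + ∫ s in ρ..t, d s * x s)⁺ * t ^ (-(1 + θ₂))
      ≤ (K + ∫ s in ρ..t, d s * x s)⁺ * N t :=
        mul_le_mul_of_nonneg_left (rpow_le_integratingFactor hC₀ hε (hρ.le.trans ht))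
          (posPart_nonneg _)
    _ ≤ K⁺ * N ρ + ∫ s in ρ..t, β s * (C * s ^ θ) * N s :=
        posPart_add_integral_mul_le ht (hdx t ht) hβ hp
          (continuousOn_id.inv₀ fun s hs => (hpos hs).ne') (fun s hs => hd_nonneg s hs.1)
          (fun s hs => hd_le s hs.1) (fun s hs => mul_nonneg hC (Real.rpow_nonneg (hpos hs).le θ))
          (fun s hs => inv_nonneg.2 (hpos hs).le) (fun s hs => hx s hs.1)
          (fun s hs => integratingFactor_nonneg (hpos hs).le) hN
    _ ≤ K⁺ * N ρ + ∫ s in ρ..t,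
          β ρ * C * Real.exp (C₀ / ε * ρ ^ (-ε)) * s ^ (θ - θ₂ - 1) := by
        refine add_le_add le_rfl (intervalIntegral.integral_mono_on ht
          (((hβ.mul hp).mul hN_cont).intervalIntegrable_of_Icc ht)
          ((continuousOn_const.mul (hrpow _)).intervalIntegrable_of_Icc ht) fun s hs => ?_)
        exact coefficient_mul_forcing_mul_integratingFactor_le hC hC₀ hε hρ hs.1
          (hβ_nonneg s hs.1)
    _ = _ := by rw [intervalIntegral.integral_const_mul]

theorem exists_le_mul_rpow_mul_rateProfile (hε : 0 < ε) (hρ : 0 < ρ) (hC : 0 ≤ C)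
    (hC₀ : 0 ≤ C₀) (hd_nonneg : ∀ s, ρ ≤ s → 0 ≤ d s)
    (hd_le : ∀ s, ρ ≤ s → d s ≤ 1 + θ₂ + C₀ * s ^ (-ε))
    (hdx : ∀ t, ρ ≤ t → IntervalIntegrable (fun s => d s * x s) volume ρ t)
    (hx : ∀ t, ρ ≤ t → x t ≤ C * t ^ θ + t⁻¹ * (K + ∫ s in ρ..t, d s * x s)) :
    ∃ M : ℝ, 0 ≤ M ∧ ∀ t, ρ ≤ t → x t ≤ M * (t ^ θ₂ * rateProfile (θ - θ₂) ρ t) := by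
  obtain ⟨A, B, hA, hB, hAB⟩ :=
    exists_posPart_add_integral_mul_rpow_le hε hρ hC hC₀ hd_nonneg hd_le hdx hx
  refine ⟨A + C + B, by positivity, fun t ht => ?_⟩
  have ht_pos : 0 < t := hρ.trans_le ht
  set y := K + ∫ s in ρ..t, d s * x s
  set I := ∫ s in ρ..t, s ^ (θ - θ₂ - 1) with hI
  have hI_nonneg : 0 ≤ I := integral_rpow_nonneg hρ.le ht
  have hinv : t⁻¹ = t ^ θ₂ * t ^ (-(1 + θ₂)) := by
    rw [← Real.rpow_add ht_pos, ← Real.rpow_neg_one]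
    ring_nf
  have hsplit : t ^ θ = t ^ θ₂ * t ^ (θ - θ₂) := by
    rw [← Real.rpow_add ht_pos, add_sub_cancel]
  calc x t ≤ C * t ^ θ + t⁻¹ * y := hx t ht
    _ ≤ C * t ^ θ + t⁻¹ * y⁺ := by gcongr; exact le_posPart y
    _ = t ^ θ₂ * (C * t ^ (θ - θ₂) + y⁺ * t ^ (-(1 + θ₂))) := by rw [hsplit, hinv]; ring
    _ ≤ t ^ θ₂ * (C * t ^ (θ - θ₂) + (A + B * I)) := by gcongr; exact hAB t ht
    _ ≤ t ^ θ₂ * ((A + C + B) * (1 + t ^ (θ - θ₂) + I)) := by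
        have hrest : 0 ≤ A * (t ^ (θ - θ₂) + I) + C * (1 + I) + B * (1 + t ^ (θ - θ₂)) := by
          positivity
        gcongr
        linarith
    _ = (A + C + B) * (t ^ θ₂ * rateProfile (θ - θ₂) ρ t) := by rw [rateProfile, ← hI]; ring

theorem exists_pos_le_mul_rpow_mul_of_isBigO {M : ℝ} {f g : ℝ → ℝ} (hρ : 0 ≤ ρ) (hM : 0 ≤ M)
    (hx : ∀ t, ρ ≤ t → x t ≤ M * (t ^ θ₂ * f t)) (hfg : f =O[𝓟 (Ici ρ)] g)
    (hg : ∀ t, ρ ≤ t → 0 ≤ g t) :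
    ∃ Ct : ℝ, 0 < Ct ∧ ∀ t, ρ ≤ t → x t ≤ Ct * (t ^ θ₂ * g t) := by
  obtain ⟨k, hk, hfk⟩ := hfg.exists_pos
  have hfk := isBigOWith_principal.1 hfk
  refine ⟨M * k + 1, by positivity, fun t ht => (hx t ht).trans ?_⟩
  have hf : f t ≤ k * g t := by
    simpa only [Real.norm_of_nonneg (hg t ht)] using (Real.le_norm_self _).trans (hfk t ht)
  have htθ : 0 ≤ t ^ θ₂ := Real.rpow_nonneg (hρ.trans ht) θ₂
  calc M * (t ^ θ₂ * f t) ≤ M * (t ^ θ₂ * (k * g t)) := by gcongr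
    _ ≤ (M * k + 1) * (t ^ θ₂ * g t) := by nlinarith [mul_nonneg htθ (hg t ht)]

end MainEstimate

theorem gronwall_variant_general {θ₂ θ ε ρ C C₀ : ℝ} {d x : ℝ → ℝ} (hε : 0 < ε) (hρ : 1 < ρ)
    (hC : 0 ≤ C) (hC₀ : 0 ≤ C₀) (hd_nonneg : ∀ s, ρ ≤ s → 0 ≤ d s)
    (hd_le : ∀ s, ρ ≤ s → d s ≤ 1 + θ₂ + C₀ * s ^ (-ε))
    (hdx : ∀ t, ρ ≤ t → IntervalIntegrable (fun s => d s * x s) volume 0 t)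
    (hx : ∀ t, ρ ≤ t → x t ≤ C * t ^ θ + t⁻¹ * ∫ s in (0 : ℝ)..t, d s * x s) :
    ∃ Ct : ℝ, 0 < Ct ∧ ∀ t, ρ ≤ t →
      (θ < θ₂ → x t ≤ Ct * t ^ θ₂) ∧
      (θ = θ₂ → x t ≤ Ct * t ^ θ₂ * Real.log t) ∧
      (θ₂ < θ → x t ≤ Ct * t ^ θ) := by
  have hρ_pos : 0 < ρ := zero_lt_one.trans hρ
  have hdx_tail (t : ℝ) (ht : ρ ≤ t) : IntervalIntegrable (fun s => d s * x s) volume ρ t :=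
    (hdx ρ le_rfl).symm.trans (hdx t ht)
  obtain ⟨M, hM, hbound⟩ := exists_le_mul_rpow_mul_rateProfile (θ₂ := θ₂) (θ := θ)
    (K := ∫ s in (0 : ℝ)..ρ, d s * x s) hε hρ_pos hC hC₀ hd_nonneg hd_le hdx_tail fun t ht => by
      rw [intervalIntegral.integral_add_adjacent_intervals (hdx ρ le_rfl) (hdx_tail t ht)]
      exact hx t ht
  have hrate {g : ℝ → ℝ} := exists_pos_le_mul_rpow_mul_of_isBigO (g := g) hρ_pos.le hM hbound
  rcases lt_trichotomy θ θ₂ with hlt | rfl | hgt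
  · obtain ⟨Ct, hCt, h⟩ := hrate (rateProfile_isBigO_one (sub_neg.2 hlt) hρ_pos)
      fun _ _ => zero_le_one
    exact ⟨Ct, hCt, fun t ht => ⟨fun _ => by simpa using h t ht,
      fun heq => absurd heq hlt.ne, fun hgt => absurd hgt hlt.not_gt⟩⟩
  · obtain ⟨Ct, hCt, h⟩ := hrate (by simpa using rateProfile_zero_isBigO_log hρ)
      fun t ht => Real.log_nonneg (hρ.le.trans ht)
    exact ⟨Ct, hCt, fun t ht => ⟨fun hlt => absurd hlt (lt_irrefl _),
      fun _ => by simpa only [mul_assoc] using h t ht, fun hgt => absurd hgt (lt_irrefl _)⟩⟩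
  · obtain ⟨Ct, hCt, h⟩ := hrate (rateProfile_isBigO_rpow (sub_pos.2 hgt) hρ_pos)
      fun t ht => Real.rpow_nonneg (hρ_pos.le.trans ht) _
    refine ⟨Ct, hCt, fun t ht => ⟨fun hlt => absurd hlt hgt.not_gt,
      fun heq => absurd heq hgt.ne', fun _ => ?_⟩⟩
    simpa only [← Real.rpow_add (hρ_pos.trans_le ht), add_sub_cancel] using h t ht

theorem gronwall_variant
    (θ₂ θ εe ρs C C₀ D : ℝ)
    (hθ₂ : 0 < θ₂) (hθ₂1 : θ₂ < 1) (hθ : 0 ≤ θ) (hεe : 0 < εe) (hρs : 1 < ρs)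
    (hC : 0 < C) (hC₀ : 0 < C₀) (hD : 0 < D)
    (d x : ℝ → ℝ)
    (hd_meas : Measurable d)
    (hd_pos : ∀ s : ℝ, 0 < s → 0 < d s ∧ d s ≤ D)
    (hd_asymp : ∀ r : ℝ, ρs ≤ r → |d r - (1 + θ₂)| ≤ C₀ * r ^ (-εe))
    (hx_meas : Measurable x)
    (hx_nn : ∀ t : ℝ, 0 < t → 0 ≤ x t)
    (hx_int : ∀ t : ℝ, 0 < t → IntervalIntegrable x volume 0 t)
    (hx_ineq : ∀ t : ℝ, ρs ≤ t → x t ≤ C * t ^ θ + t⁻¹ * ∫ s in (0:ℝ)..t, d s * x s) :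
    ∃ Ct : ℝ, 0 < Ct ∧ ∀ t : ℝ, ρs ≤ t →
      (θ < θ₂ → x t ≤ Ct * t ^ θ₂) ∧
      (θ = θ₂ → x t ≤ Ct * t ^ θ₂ * Real.log t) ∧
      (θ₂ < θ → x t ≤ Ct * t ^ θ) := by
  have hpos {t : ℝ} (ht : ρs ≤ t) : 0 < t := zero_lt_one.trans (hρs.trans_le ht)
  exact gronwall_variant_general hεe hρs hC.le hC₀.le (fun s hs => (hd_pos s (hpos hs)).1.le)
    (fun r hr => sub_le_iff_le_add'.1 (abs_le.1 (hd_asymp r hr)).2)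
    (fun t ht => intervalIntegrable_mul_of_norm_le (hpos ht).le hd_meas.aestronglyMeasurable
      (fun s hs => (Real.norm_of_nonneg (hd_pos s hs.1).1.le).trans_le (hd_pos s hs.1).2)
      (hx_int t (hpos ht))) hx_ineq
end
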